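/- Let n ≥ 2 and let A ⊆ ℝⁿ be a Borel set with dimH A > n−1. For x ∈ ℝⁿ, let π_x : ℝⁿ \ {x} → S^{n−1} be the radial projection π_x(y) = (y − x)/‖y − x‖. Then the set of points x ∈ ℝⁿ for which H^{n−1}( π_x( A \ {x} ) ) = 0 has Hausdorff dimension at most n−1. -/

import Mathlib

open MeasureTheory Metric Set
open scoped ENNReal RealInnerProductSpace

/-! ### Contents of nets -/

namespace Net

variable {X C : Type*} (q : ℕ → X → C)

/-- A family of cells `(k, c)`, standing for the sets `{x | q k x = c}`, covers `B`. -/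
def Covers (S : Set (ℕ × C)) (B : Set X) : Prop := ∀ x ∈ B, ∃ k, (k, q k x) ∈ S

/-- The members of a family of cells that lie in no member of smaller generation. -/
def maximals (S : Set (ℕ × C)) : Set (ℕ × C) :=
  {p | p ∈ S ∧ ∀ l < p.1, ∀ x, q p.1 x = p.2 → (l, q l x) ∉ S}

/-- The total weight of a family of cells. -/
noncomputable def cost {ι : Type*} (w : ι → ℝ≥0∞) (S : Set ι) : ℝ≥0∞ := ∑' p, S.indicator w p

/-- The least total weight of a covering of `B` by cells. -/
noncomputable def content (w : ℕ × C → ℝ≥0∞) (B : Set X) : ℝ≥0∞ :=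
  ⨅ (S : Set (ℕ × C)) (_ : Covers q S B), cost w S

variable {q} {w : ℕ × C → ℝ≥0∞}

theorem cost_mono {ι : Type*} {w : ι → ℝ≥0∞} {S T : Set ι} (h : S ⊆ T) : cost w S ≤ cost w T :=
  ENNReal.tsum_le_tsum fun _ => indicator_le_indicator_of_subset h (fun _ => zero_le) _

theorem content_le_cost {S : Set (ℕ × C)} {B : Set X} (h : Covers q S B) :
    content q w B ≤ cost w S := iInf₂_le S h

theorem content_mono {B D : Set X} (h : B ⊆ D) : content q w B ≤ content q w D :=
  le_iInf₂ fun _ hS => content_le_cost fun x hx => hS x (h hx)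

theorem content_empty : content q w (∅ : Set X) = 0 :=
  le_antisymm ((content_le_cost (S := ∅) fun x hx => hx.elim).trans (by simp [cost])) (zero_le)

theorem exists_cost_lt {B : Set X} {c : ℝ≥0∞} (h : content q w B < c) :
    ∃ S, Covers q S B ∧ cost w S < c := by
  simpa [content, iInf_lt_iff] using h

theorem maximals_subset (S : Set (ℕ × C)) : maximals q S ⊆ S := fun _ h => h.1

theorem mem_maximals_of_least (hq : ∀ k l x y, l ≤ k → q k x = q k y → q l x = q l y)
    {S : Set (ℕ × C)} {x : X} {k : ℕ} (hk : (k, q k x) ∈ S)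
    (hmin : ∀ l < k, (l, q l x) ∉ S) : (k, q k x) ∈ maximals q S :=
  ⟨hk, fun l hl y hy => by rw [hq k l y x hl.le hy]; exact hmin l hl⟩

theorem Covers.maximals (hq : ∀ k l x y, l ≤ k → q k x = q k y → q l x = q l y)
    {S : Set (ℕ × C)} {B : Set X} (h : Covers q S B) : Covers q (maximals q S) B := by
  classical
  intro x hx
  exact ⟨Nat.find (h x hx), mem_maximals_of_least hq (Nat.find_spec (h x hx))
    fun l hl => Nat.find_min (h x hx) hl⟩

theorem generation_unique {S : Set (ℕ × C)} {x : X} {k l : ℕ}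
    (hk : (k, q k x) ∈ maximals q S) (hl : (l, q l x) ∈ maximals q S) : k = l := by
  rcases lt_trichotomy k l with h | h | h
  · exact (hl.2 k h x rfl hk.1).elim
  · exact h
  · exact (hk.2 l h x rfl hl.1).elim

/-- Strong subadditivity of the content, at the level of coverings. -/
theorem cost_maximals_union_add_content_inter_le {S T : Set (ℕ × C)} {B D : Set X}
    (hS : Covers q S B) (hT : Covers q T D) :
    cost w (maximals q (S ∪ T)) + content q w (B ∩ D) ≤ cost w S + cost w T := by
  set R := (S ∩ T) ∪ ((S ∪ T) \ maximals q (S ∪ T)) with hR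
  have hRc : Covers q R (B ∩ D) := by
    rintro x ⟨hB, hD⟩
    obtain ⟨k, hk⟩ := hS x hB
    obtain ⟨l, hl⟩ := hT x hD
    rcases lt_trichotomy k l with h | h | h
    · exact ⟨l, Or.inr ⟨Or.inr hl, fun hm => hm.2 k h x rfl (Or.inl hk)⟩⟩
    · subst h; exact ⟨k, Or.inl ⟨hk, hl⟩⟩
    · exact ⟨k, Or.inr ⟨Or.inl hk, fun hm => hm.2 l h x rfl (Or.inr hl)⟩⟩
  refine (add_le_add_right (content_le_cost hRc) _).trans ?_
  unfold cost
  rw [← ENNReal.tsum_add, ← ENNReal.tsum_add]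
  refine ENNReal.tsum_le_tsum fun p => ?_
  have hsub := @maximals_subset X C q (S ∪ T) p
  by_cases h1 : p ∈ S <;> by_cases h2 : p ∈ T <;> by_cases h3 : p ∈ maximals q (S ∪ T) <;>
    simp_all [indicator]

theorem maximals_union_subset (V T : Set (ℕ × C)) :
    maximals q (V ∪ T) ⊆ maximals q (maximals q V ∪ T) := by
  rintro p ⟨hp, hmin⟩
  refine ⟨hp.imp (fun h => ⟨h, fun l hl x hx hV => hmin l hl x hx (Or.inl hV)⟩) id,
    fun l hl x hx h => hmin l hl x hx (h.imp (fun h => h.1) id)⟩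

theorem content_iUnion_le (hq : ∀ k l x y, l ≤ k → q k x = q k y → q l x = q l y)
    {A : ℕ → Set X} (hA : Monotone A) :
    content q w (⋃ k, A k) ≤ ⨆ k, content q w (A k) := by
  refine ENNReal.le_of_forall_pos_le_add fun ε hε hfin => ?_
  have hfin' : ∀ k, content q w (A k) ≠ ∞ := fun k =>
    ((le_iSup (fun k => content q w (A k)) k).trans_lt hfin).ne
  obtain ⟨e, he0, hes⟩ := ENNReal.exists_pos_sum_of_countable (ε := (ε : ℝ≥0∞))
    (by exact_mod_cast hε.ne') ℕ
  have hex : ∀ k, ∃ S, Covers q S (A k) ∧ cost w S < content q w (A k) + e k := fun k =>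
    exists_cost_lt (ENNReal.lt_add_right (hfin' k) (by exact_mod_cast (he0 k).ne'))
  choose S hS hcost using hex
  let V : ℕ → Set (ℕ × C) := fun N => ⋃ k ∈ Finset.range (N + 1), S k
  have hVcov : ∀ N, Covers q (V N) (A N) := fun N x hx => by
    obtain ⟨k, hk⟩ := hS N x hx
    exact ⟨k, mem_biUnion (Finset.mem_coe.2 (Finset.self_mem_range_succ N)) hk⟩
  have hVsucc : ∀ N, V (N + 1) = V N ∪ S (N + 1) := fun N => by
    simp only [V, Finset.range_add_one (n := N + 1), Finset.set_biUnion_insert]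
    rw [union_comm]
  have hbound : ∀ N, cost w (maximals q (V N)) ≤
      content q w (A N) + ∑ k ∈ Finset.range (N + 1), (e k : ℝ≥0∞) := by
    intro N
    induction N with
    | zero =>
      refine (cost_mono (maximals_subset _)).trans ?_
      simpa [V] using (hcost 0).le
    | succ N ih =>
      have h1 := cost_maximals_union_add_content_inter_le (w := w)
        ((hVcov N).maximals hq) (hS (N + 1))
      rw [inter_eq_self_of_subset_left (hA N.le_succ)] at h1
      have h2 : cost w (maximals q (V (N + 1))) + content q w (A N) ≤
          (content q w (A (N + 1)) + ∑ k ∈ Finset.range (N + 1 + 1), (e k : ℝ≥0∞))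
            + content q w (A N) := by
        calc _ ≤ _ := add_le_add_left (cost_mono
                (by rw [hVsucc]; exact maximals_union_subset _ _)) _
          _ ≤ _ := h1
          _ ≤ _ := add_le_add ih (hcost (N + 1)).le
          _ = _ := by rw [Finset.sum_range_succ _ (N + 1)]; ring
      exact (ENNReal.add_le_add_iff_right (hfin' N)).1 h2
  have hcov : Covers q (⋃ k, S k) (⋃ k, A k) := by
    intro x hx
    obtain ⟨k, hk⟩ := mem_iUnion.1 hx
    obtain ⟨l, hl⟩ := hS k x hk
    exact ⟨l, mem_iUnion.2 ⟨k, hl⟩⟩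
  refine (content_le_cost (hcov.maximals hq)).trans ?_
  rw [cost, ENNReal.tsum_eq_iSup_sum]
  refine iSup_le fun F => ?_
  have hev : ∀ p ∈ maximals q (⋃ k, S k), ∀ᶠ N in Filter.atTop, p ∈ maximals q (V N) := by
    intro p hp
    obtain ⟨k, hk⟩ := mem_iUnion.1 hp.1
    filter_upwards [Filter.eventually_ge_atTop k] with N hN
    refine ⟨mem_biUnion (Finset.mem_coe.2 (Finset.mem_range.2 (by omega))) hk,
      fun l hl x hx h => hp.2 l hl x hx ?_⟩
    obtain ⟨j, -, hj⟩ := mem_iUnion₂.1 h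
    exact mem_iUnion.2 ⟨j, hj⟩
  have hall : ∀ᶠ N in Filter.atTop, ∀ p ∈ F, p ∈ maximals q (⋃ k, S k) →
      p ∈ maximals q (V N) := by
    rw [Filter.eventually_all_finset]
    intro p _
    by_cases hp : p ∈ maximals q (⋃ k, S k)
    · filter_upwards [hev p hp] with N hN _ using hN
    · exact Filter.Eventually.of_forall fun N h => (hp h).elim
  obtain ⟨N, hN⟩ := hall.exists
  calc ∑ p ∈ F, (maximals q (⋃ k, S k)).indicator w p
      ≤ ∑ p ∈ F, (maximals q (V N)).indicator w p := Finset.sum_le_sum fun p hp => by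
        by_cases h : p ∈ maximals q (⋃ k, S k)
        · rw [indicator_of_mem h, indicator_of_mem (hN p hp h)]
        · rw [indicator_of_notMem h]; exact zero_le
    _ ≤ cost w (maximals q (V N)) := ENNReal.sum_le_tsum _
    _ ≤ _ := hbound N
    _ ≤ _ := add_le_add (le_iSup (fun k => content q w (A k)) N)
        ((ENNReal.sum_le_tsum _).trans hes.le)

open scoped Classical in
/-- A finite weighted covering costs at least as much as the content. -/
theorem mul_content_le_sum (hq : ∀ k l x y, l ≤ k → q k x = q k y → q l x = q l y)
    {B : Set X} (F : Finset (ℕ × C)) : ∀ (c : ℕ × C → NNReal) (a : NNReal),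
    (∀ x ∈ B, a ≤ ∑ p ∈ F with q p.1 x = p.2, c p) →
      a * content q w B ≤ ∑ p ∈ F, c p * w p := by
  induction hn : F.card using Nat.strong_induction_on generalizing F with
  | _ n ih =>
  intro c a h
  subst hn
  by_cases hz : ∃ p ∈ F, c p = 0
  · obtain ⟨p, hp, hcp⟩ := hz
    have := ih _ (Finset.card_erase_lt_of_mem hp) (F.erase p) rfl c a (fun x hx => by
      refine (h x hx).trans (le_of_eq ?_)
      rw [Finset.filter_erase, Finset.sum_erase _ hcp])
    rwa [Finset.sum_erase _ (by simp [hcp])] at this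
  push Not at hz
  rcases eq_or_ne a 0 with rfl | ha
  · simp
  have hcov : Covers q (F : Set (ℕ × C)) B := by
    intro x hx
    by_contra! hcon
    refine ha (le_antisymm ((h x hx).trans (le_of_eq ?_)) (zero_le))
    refine Finset.sum_eq_zero fun p hp => ?_
    rw [Finset.mem_filter] at hp
    exact (hcon p.1 (by rw [hp.2]; exact hp.1)).elim
  set U : Finset (ℕ × C) := {p ∈ F | p ∈ maximals q (F : Set (ℕ × C))} with hU
  have hUF : U ⊆ F := Finset.filter_subset _ _
  have hUcov : Covers q (U : Set (ℕ × C)) B := fun x hx => by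
    obtain ⟨k, hk⟩ := hcov.maximals hq x hx
    exact ⟨k, Finset.mem_coe.2 (Finset.mem_filter.2 ⟨hk.1, hk⟩)⟩
  have hUcost : content q w B ≤ ∑ p ∈ U, w p := by
    refine (content_le_cost hUcov).trans (le_of_eq ?_)
    rw [cost, tsum_eq_sum (s := U) (fun p hp => indicator_of_notMem (by simpa using hp) _)]
    exact Finset.sum_congr rfl fun p hp => indicator_of_mem (Finset.mem_coe.2 hp) _
  by_cases hall : ∀ p ∈ U, a ≤ c p
  · calc a * content q w B ≤ a * ∑ p ∈ U, w p := by gcongr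
      _ = ∑ p ∈ U, a * w p := Finset.mul_sum _ _ _
      _ ≤ ∑ p ∈ U, c p * w p := Finset.sum_le_sum fun p hp => by
          gcongr; exact_mod_cast hall p hp
      _ ≤ _ := Finset.sum_le_sum_of_subset hUF
  push Not at hall
  obtain ⟨p₁, hp₁U, hp₁⟩ := hall
  obtain ⟨p₀, hp₀U, hp₀⟩ := U.exists_min_image c ⟨p₁, hp₁U⟩
  set d := c p₀ with hd
  have hda : d ≤ a := (hp₀ p₁ hp₁U).trans hp₁.le
  set c' : ℕ × C → NNReal := fun p => if p ∈ U then c p - d else c p with hc'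
  have hcc : ∀ p, c p = c' p + if p ∈ U then d else 0 := by
    intro p
    by_cases hp : p ∈ U
    · simp only [hc', if_pos hp]; rw [tsub_add_cancel_of_le (hp₀ p hp)]
    · simp [hc', hp]
  have hc'0 : c' p₀ = 0 := by simp [hc', hp₀U, hd]
  have key := ih _ (Finset.card_erase_lt_of_mem (hUF hp₀U)) (F.erase p₀) rfl c' (a - d)
    (fun x hx => by
      rw [Finset.filter_erase, Finset.sum_erase _ hc'0, tsub_le_iff_right]
      refine (h x hx).trans ?_
      simp_rw [hcc, Finset.sum_add_distrib]
      gcongr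
      rw [← Finset.sum_filter, Finset.sum_const]
      refine (nsmul_le_nsmul_left (zero_le) (m := 1) (Finset.card_le_one.2 ?_)).trans
        (one_nsmul _).le
      intro p hp p' hp'
      simp only [Finset.mem_filter, hU] at hp hp'
      obtain ⟨⟨-, e⟩, -, m⟩ := hp
      obtain ⟨⟨-, e'⟩, -, m'⟩ := hp'
      obtain ⟨k, r⟩ := p
      obtain ⟨k', r'⟩ := p'
      dsimp only at e e'
      subst e e'
      have := generation_unique m m'
      subst this
      rfl)
  rw [Finset.sum_erase _ (by simp [hc'0])] at key
  calc (a : ℝ≥0∞) * content q w B = ((a - d : NNReal) + d : NNReal) * content q w B := by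
        rw [tsub_add_cancel_of_le hda]
    _ = (a - d : NNReal) * content q w B + d * content q w B := by push_cast; ring
    _ ≤ ∑ p ∈ F, c' p * w p + d * ∑ p ∈ U, w p := by gcongr
    _ = ∑ p ∈ F, c p * w p := by
        rw [← Finset.inter_eq_right.2 hUF, Finset.mul_sum, ← Finset.sum_ite_mem,
          ← Finset.sum_add_distrib]
        refine Finset.sum_congr rfl fun p _ => ?_
        rw [hcc p]
        by_cases hp : p ∈ U <;> simp [hp, add_mul]

end Net

/-- Choquet capacitability of continuous images of the Baire space. -/
theorem exists_isCompact_forall_isOpen_le {X : Type*} [TopologicalSpace X] {φ : Set X → ℝ≥0∞}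
    (hmono : Monotone φ) (hinc : ∀ A : ℕ → Set X, Monotone A → φ (⋃ k, A k) ≤ ⨆ k, φ (A k))
    {f : (ℕ → ℕ) → X} (hf : Continuous f) {c : ℝ≥0∞} (hc : c < φ (range f)) :
    ∃ K ⊆ range f, IsCompact K ∧ ∀ U, IsOpen U → K ⊆ U → c ≤ φ U := by
  let D : (ℕ → ℕ) → ℕ → Set (ℕ → ℕ) := fun G k => {x | ∀ i < k, x i ≤ G i}
  have hDcongr : ∀ G G' k, (∀ i < k, G i = G' i) → D G k = D G' k := fun G G' k h => by
    ext x
    exact forall₂_congr fun i hi => by rw [h i hi]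
  have hstep : ∀ G k, c < φ (f '' D G k) →
      ∃ m, c < φ (f '' D (Function.update G k m) (k + 1)) := by
    intro G k h
    have hU : (⋃ m, f '' D (Function.update G k m) (k + 1)) = f '' D G k := by
      rw [← image_iUnion]
      congr 1
      ext x
      simp only [mem_iUnion, D, mem_ofPred_eq]
      constructor
      · rintro ⟨m, hm⟩ i hi
        simpa [hi.ne] using hm i (by omega)
      · intro hx
        refine ⟨x k, fun i hi => ?_⟩
        rcases Nat.lt_succ_iff_lt_or_eq.1 hi with h | rfl
        · simpa [h.ne] using hx i h
        · simp
    have hm : Monotone fun m => f '' D (Function.update G k m) (k + 1) := by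
      intro m m' hmm
      refine image_mono fun x hx i hi => (hx i hi).trans ?_
      exact update_le_update_iff.2 ⟨hmm, fun _ _ => le_rfl⟩ i
    have := hinc _ hm
    rw [hU] at this
    exact lt_iSup_iff.1 (h.trans_le this)
  choose! m hm using hstep
  let G : ℕ → ℕ → ℕ := fun k => Nat.rec 0 (fun k G => Function.update G k (m G k)) k
  have hG : ∀ k, c < φ (f '' D (G k) k) := by
    intro k
    induction k with
    | zero => simpa [D] using hc
    | succ k ih => exact hm _ _ ih
  let g : ℕ → ℕ := fun i => G (i + 1) i
  have hGg : ∀ k, ∀ i < k, G k i = g i := by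
    intro k
    induction k with
    | zero => simp
    | succ k ih =>
      intro i hi
      rcases Nat.lt_succ_iff_lt_or_eq.1 hi with h | rfl
      · exact (Function.update_of_ne h.ne _ _).trans (ih i h)
      · rfl
  have hg : ∀ k, c < φ (f '' D g k) := fun k => by
    rw [← hDcongr _ _ k (hGg k)]; exact hG k
  have hcomp : IsCompact (univ.pi fun i => Iic (g i)) :=
    isCompact_univ_pi fun i => (finite_Iic (g i)).isCompact
  refine ⟨f '' univ.pi fun i => Iic (g i), image_subset_range _ _, hcomp.image hf,
    fun U hU hKU => ?_⟩
  suffices ∃ k, f '' D g k ⊆ U by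
    obtain ⟨k, hk⟩ := this
    exact (hg k).le.trans (hmono hk)
  by_contra! hcon
  have hcon' : ∀ k, ∃ x ∈ D g k, f x ∉ U := fun k => by
    obtain ⟨_, ⟨x, hx, rfl⟩, h⟩ := not_subset.1 (hcon k)
    exact ⟨x, hx, h⟩
  choose x hx hxU using hcon'
  obtain ⟨y, hy, s, hs, hlim⟩ := hcomp.tendsto_subseq
    (x := fun k i => min (x k i) (g i)) (fun k i _ => mem_Iic.2 (min_le_right _ _))
  have hlim' : Filter.Tendsto (fun k => x (s k)) Filter.atTop (nhds y) := by
    rw [tendsto_pi_nhds] at hlim ⊢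
    intro i
    refine (hlim i).congr' ?_
    filter_upwards [Filter.eventually_gt_atTop i] with k hk
    exact min_eq_left (hx (s k) i (hk.trans_le (hs.id_le k)))
  have hev := (hf.tendsto y).comp hlim' |>.eventually_mem (hU.mem_nhds (hKU ⟨y, hy, rfl⟩))
  obtain ⟨k, hk⟩ := hev.exists
  exact hxU _ hk

open scoped CompactlySupported in
/-- Duality between measures and weighted coverings: if every finite weighted covering of a compact
space `K` has total weight at least `m`, then `K` carries a measure of total mass at least `m`
that is dominated by the weights of coverings. -/
theorem exists_measure_of_weighted_covers {K ι : Type*} [TopologicalSpace K] [CompactSpace K]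
    [T2Space K] [MeasurableSpace K] [BorelSpace K] [Nonempty K] (Q : ι → Set K) (w : ι → ℝ)
    (hw : ∀ p, 0 ≤ w p) (F₀ : Finset ι) (hF₀ : ∀ x, ∃ p ∈ F₀, x ∈ Q p) {m : ℝ} (hm0 : 0 ≤ m)
    (hm : ∀ c : ι →₀ NNReal,
      (∀ x, 1 ≤ c.sum fun p a => (Q p).indicator (fun _ => (a : ℝ)) x) →
        m ≤ c.sum fun p a => a * w p) :
    ∃ μ : Measure K, IsFiniteMeasure μ ∧ ENNReal.ofReal m ≤ μ univ ∧
      ∀ S G : Set K, IsCompact S → IsOpen G → S ⊆ G → ∀ F : Finset ι,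
        (∀ x ∈ G, ∃ p ∈ F, x ∈ Q p) → μ S ≤ ENNReal.ofReal (∑ p ∈ F, w p) := by
  classical
  let W : (ι →₀ NNReal) → K → ℝ := fun c x => c.sum fun p a => (Q p).indicator (fun _ => (a : ℝ)) x
  let V : (ι →₀ NNReal) → ℝ := fun c => c.sum fun p a => a * w p
  have hW_add : ∀ c d x, W (c + d) x = W c x + W d x := fun c d x =>
    Finsupp.sum_add_index' (by simp) (fun p a b => by by_cases h : x ∈ Q p <;> simp [h])
  have hV_add : ∀ c d, V (c + d) = V c + V d := fun c d =>
    Finsupp.sum_add_index' (by simp) (fun p a b => by push_cast; ring)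
  have hW_smul : ∀ (r : NNReal) c x, W (r • c) x = r * W c x := fun r c x => by
    simp only [W]
    rw [Finsupp.sum_smul_index' (by simp), Finsupp.mul_sum]
    refine Finsupp.sum_congr fun p _ => ?_
    by_cases h : x ∈ Q p <;> simp [h]
  have hV_smul : ∀ (r : NNReal) c, V (r • c) = r * V c := fun r c => by
    simp only [V]
    rw [Finsupp.sum_smul_index' (by simp), Finsupp.mul_sum]
    refine Finsupp.sum_congr fun p _ => ?_
    simp [mul_assoc]
  have hV0 : ∀ c, 0 ≤ V c := fun c => Finsupp.sum_nonneg fun p _ => mul_nonneg (by simp) (hw p)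
  have hW0 : ∀ c x, 0 ≤ W c x := fun c x => Finsupp.sum_nonneg fun p _ =>
    indicator_nonneg (fun _ _ => by simp) _
  let one (F : Finset ι) : ι →₀ NNReal := Finsupp.indicator F fun _ _ => 1
  have hV_one : ∀ F, V (one F) = ∑ p ∈ F, w p := fun F => by
    simp only [V, one]
    rw [Finsupp.sum_of_support_subset _ (Finsupp.support_indicator_subset _ _) _ (by simp)]
    exact Finset.sum_congr rfl fun p hp => by simp [Finsupp.indicator_apply, hp]
  have hW_one : ∀ F x, (∃ p ∈ F, x ∈ Q p) → 1 ≤ W (one F) x := by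
    rintro F x ⟨p, hp, hx⟩
    simp only [W, one]
    rw [Finsupp.sum_of_support_subset _ (Finsupp.support_indicator_subset _ _) _ (by simp)]
    refine le_trans ?_ (Finset.single_le_sum (f := fun i => (Q i).indicator
      (fun _ => ((Finsupp.indicator F fun _ _ => (1 : NNReal)) i : ℝ)) x)
      (fun i _ => indicator_nonneg (fun _ _ => by simp) _) hp)
    simp [hx, Finsupp.indicator_apply, hp]
  let T : C_c(K, ℝ) → Set ℝ := fun f => V '' {c | ∀ x, f x ≤ W c x}
  let N : C_c(K, ℝ) → ℝ := fun f => sInf (T f)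
  have hbdd : ∀ f, BddBelow (T f) := fun f => ⟨0, by rintro _ ⟨c, -, rfl⟩; exact hV0 c⟩
  have hne : ∀ f, (T f).Nonempty := by
    intro f
    obtain ⟨M, hM⟩ := (isCompact_range f.continuous).bddAbove
    refine ⟨_, M.toNNReal • one F₀, ?_, rfl⟩
    intro x
    rw [hW_smul]
    calc f x ≤ M := hM ⟨x, rfl⟩
      _ ≤ M.toNNReal := Real.le_coe_toNNReal M
      _ ≤ _ := le_mul_of_one_le_right (by simp) (hW_one _ _ (hF₀ x))
  have hN_le : ∀ f c, (∀ x, f x ≤ W c x) → N f ≤ V c := fun f c h =>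
    csInf_le (hbdd f) ⟨c, h, rfl⟩
  have hN0 : ∀ f, 0 ≤ N f := fun f => le_csInf (hne f) (by rintro _ ⟨c, -, rfl⟩; exact hV0 c)
  have hN_smul_le : ∀ r : ℝ, 0 < r → ∀ f, N (r • f) ≤ r * N f := by
    intro r hr f
    rw [← div_le_iff₀' hr]
    refine le_csInf (hne f) ?_
    rintro _ ⟨c, hc, rfl⟩
    rw [div_le_iff₀' hr]
    have := hN_le (r • f) (r.toNNReal • c) fun x => by
      rw [hW_smul, Real.coe_toNNReal r hr.le]
      exact mul_le_mul_of_nonneg_left (hc x) hr.le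
    rwa [hV_smul, Real.coe_toNNReal r hr.le] at this
  have hN_smul : ∀ r : ℝ, 0 < r → ∀ f, N (r • f) = r * N f := by
    intro r hr f
    refine le_antisymm (hN_smul_le r hr f) ?_
    have := hN_smul_le r⁻¹ (inv_pos.2 hr) (r • f)
    rwa [inv_smul_smul₀ hr.ne', inv_mul_eq_div, le_div_iff₀' hr] at this
  have hN_add : ∀ f g, N (f + g) ≤ N f + N g := by
    intro f g
    rw [← sub_le_iff_le_add]
    refine le_csInf (hne f) ?_
    rintro _ ⟨c, hc, rfl⟩
    rw [sub_le_comm]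
    refine le_csInf (hne g) ?_
    rintro _ ⟨d, hd, rfl⟩
    rw [sub_le_iff_le_add', ← hV_add]
    exact hN_le _ _ fun x => by rw [hW_add]; exact add_le_add (hc x) (hd x)
  let e : C_c(K, ℝ) := CompactlySupportedContinuousMap.continuousMapEquiv 1
  have he : ∀ x, e x = 1 := fun x => rfl
  have hH : ∀ c : ℝ, c • e = 0 → c • m = 0 := by
    intro c hc
    obtain ⟨x⟩ := ‹Nonempty K›
    have : c * 1 = 0 := DFunLike.congr_fun hc x
    simp [show c = 0 by simpa using this]
  obtain ⟨L, hL, hLN⟩ := exists_extension_of_le_sublinear (LinearPMap.mkSpanSingleton' e m hH) N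
    hN_smul hN_add (by
      rintro ⟨f, hf⟩
      obtain ⟨r, rfl⟩ := Submodule.mem_span_singleton.1 hf
      rw [LinearPMap.mkSpanSingleton'_apply]
      change r * m ≤ N (r • e)
      rcases le_or_gt r 0 with hr | hr
      · exact (mul_nonpos_of_nonpos_of_nonneg hr hm0).trans (hN0 _)
      · rw [hN_smul r hr]
        gcongr
        refine le_csInf (hne e) ?_
        rintro _ ⟨c, hc, rfl⟩
        exact hm c hc)
  have hLe : L e = m := by
    rw [hL ⟨e, Submodule.mem_span_singleton_self e⟩]
    exact LinearPMap.mkSpanSingleton'_apply_self _ _ _ _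
  have hLpos : ∀ f, 0 ≤ f → 0 ≤ L f := by
    intro f hf
    have h1 : N (-f) ≤ V 0 := hN_le _ _ fun x => (neg_nonpos.2 (hf x)).trans (hW0 _ _)
    have h2 := hLN (-f)
    have h3 : V 0 = 0 := by simp [V]
    rw [map_neg] at h2
    linarith
  let Λ : C_c(K, ℝ) →ₚ[ℝ] ℝ := PositiveLinearMap.mk₀ L hLpos
  have hΛ : ∀ f, Λ f = L f := fun f => rfl
  refine ⟨RealRMK.rieszMeasure Λ, ⟨?_⟩, ?_, ?_⟩
  · exact (RealRMK.rieszMeasure_le_of_eq_one Λ (f := e) (fun x => by simp [he]) isCompact_univ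
      fun x _ => he x).trans_lt ENNReal.ofReal_lt_top
  · rw [← hLe, ← hΛ]
    exact RealRMK.le_rieszMeasure_tsupport_subset Λ (f := e) (fun x => by simp [he])
      (subset_univ _)
  · intro S G hS hG hSG F hF
    obtain ⟨f, hf1, hf0, hfc, hf⟩ := exists_continuous_one_zero_of_isCompact hS hG.isClosed_compl
      (disjoint_compl_right_iff_subset.2 hSG)
    refine (RealRMK.rieszMeasure_le_of_eq_one Λ (f := ⟨f, hfc⟩) (fun x => (hf x).1) hS
      fun x hx => hf1 hx).trans (ENNReal.ofReal_le_ofReal ?_)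
    rw [hΛ, ← hV_one]
    refine (hLN _).trans (hN_le _ _ fun x => ?_)
    by_cases hx : x ∈ G
    · exact (hf x).2.trans (hW_one F x (hF x hx))
    · exact (hf0 hx).le.trans (hW0 _ _)

/-! ### Frostman's lemma -/

namespace DyadicCube

variable {ι : Type*}

/-- The index of the dyadic cube of side `2⁻ᵏ` containing `x`. -/
noncomputable def code (k : ℕ) (x : ι → ℝ) : ι → ℤ := fun i => ⌊2 ^ k * x i⌋

/-- The weight `ρᵏ` of a dyadic cube of side `2⁻ᵏ`. -/
noncomputable def weight (ρ : NNReal) (p : ℕ × (ι → ℤ)) : ℝ≥0∞ := (ρ : ℝ≥0∞) ^ p.1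

theorem code_eq_of_le (k l : ℕ) (x y : ι → ℝ) (h : l ≤ k) (hk : code k x = code k y) :
    code l x = code l y := by
  have key : ∀ z : ι → ℝ, code l z = fun i => code k z i / ((2 ^ (k - l) : ℕ) : ℤ) := by
    intro z
    funext i
    simp only [code]
    rw [← Int.floor_div_natCast]
    congr 1
    obtain ⟨j, rfl⟩ := Nat.exists_eq_add_of_le h
    push_cast
    rw [Nat.add_sub_cancel_left, pow_add]
    field_simp
  rw [key, key, hk]

theorem exists_isOpen_content_le [Fintype ι] (ρ : NNReal) {S : Set (ℕ × (ι → ℤ))}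
    {K : Set (ι → ℝ)} (hS : Net.Covers code S K) :
    ∃ U, IsOpen U ∧ K ⊆ U ∧
      Net.content code (weight ρ) U ≤ 3 ^ Fintype.card ι * Net.cost (weight ρ) S := by
  classical
  let O : ℕ × (ι → ℤ) → Set (ι → ℝ) := fun p =>
    ⋂ i, {x | (p.2 i : ℝ) - 1 < 2 ^ p.1 * x i} ∩ {x | 2 ^ p.1 * x i < (p.2 i : ℝ) + 2}
  have hO : ∀ p, IsOpen (O p) := fun p => isOpen_iInter_of_finite fun i =>
    (isOpen_lt (by fun_prop) (by fun_prop)).inter (isOpen_lt (by fun_prop) (by fun_prop))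
  refine ⟨⋃ p ∈ S, O p, isOpen_biUnion fun p _ => hO p, fun x hx => ?_, ?_⟩
  · obtain ⟨k, hk⟩ := hS x hx
    refine mem_biUnion hk (mem_iInter.2 fun i => ⟨?_, ?_⟩)
    · have := Int.floor_le (2 ^ k * x i)
      change ((⌊2 ^ k * x i⌋ : ℤ) : ℝ) - 1 < 2 ^ k * x i
      linarith
    · have := Int.lt_floor_add_one (2 ^ k * x i)
      change 2 ^ k * x i < ((⌊2 ^ k * x i⌋ : ℤ) : ℝ) + 2
      linarith
  · let E : Finset (ι → ℤ) := Fintype.piFinset fun _ => Finset.Icc (-1) 1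
    let sh : (ι → ℤ) → (ℕ × (ι → ℤ)) ≃ (ℕ × (ι → ℤ)) := fun v =>
      Equiv.prodCongr (Equiv.refl _) (Equiv.subRight v)
    have hcov : Net.Covers code (⋃ v ∈ E, sh v ⁻¹' S) (⋃ p ∈ S, O p) := by
      intro x hx
      obtain ⟨⟨k, c⟩, hp, hxp⟩ := mem_iUnion₂.1 hx
      refine ⟨k, mem_biUnion (x := code k x - c) ?_ ?_⟩
      · rw [Finset.mem_coe, Fintype.mem_piFinset]
        intro i
        obtain ⟨h1, h2⟩ := mem_iInter.1 hxp i
        change (c i : ℝ) - 1 < 2 ^ k * x i at h1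
        change 2 ^ k * x i < (c i : ℝ) + 2 at h2
        have h3 : c i - 1 ≤ ⌊2 ^ k * x i⌋ := Int.le_floor.2 (by push_cast; exact h1.le)
        have h4 : ⌊2 ^ k * x i⌋ < c i + 2 := Int.floor_lt.2 (by push_cast; exact h2)
        rw [Finset.mem_Icc, Pi.sub_apply]
        change -1 ≤ ⌊2 ^ k * x i⌋ - c i ∧ ⌊2 ^ k * x i⌋ - c i ≤ 1
        omega
      · simpa [sh] using hp
    refine (Net.content_le_cost hcov).trans ?_
    have hcost : ∀ v, Net.cost (weight ρ) (sh v ⁻¹' S) = Net.cost (weight ρ) S := fun v => by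
      rw [Net.cost, Net.cost, ← (sh v).tsum_eq (S.indicator (weight ρ))]
      refine tsum_congr fun p => ?_
      by_cases h : sh v p ∈ S
      · rw [indicator_of_mem h, indicator_of_mem (mem_preimage.2 h)]; rfl
      · rw [indicator_of_notMem h, indicator_of_notMem (by simpa using h)]
    calc Net.cost (weight ρ) (⋃ v ∈ E, sh v ⁻¹' S)
        ≤ ∑' p, ∑ v ∈ E, (sh v ⁻¹' S).indicator (weight ρ) p := by
          refine ENNReal.tsum_le_tsum fun p => ?_
          by_cases hp : p ∈ ⋃ v ∈ E, sh v ⁻¹' S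
          · rw [indicator_of_mem hp]
            obtain ⟨v, hv, hpv⟩ := mem_iUnion₂.1 hp
            exact (indicator_of_mem hpv (weight ρ)).ge.trans
              (Finset.single_le_sum (f := fun v => (sh v ⁻¹' S).indicator (weight ρ) p)
                (fun _ _ => zero_le) hv)
          · rw [indicator_of_notMem hp]; exact zero_le
      _ = ∑ v ∈ E, Net.cost (weight ρ) (sh v ⁻¹' S) :=
          Summable.tsum_finsetSum fun _ _ => ENNReal.summable
      _ = 3 ^ Fintype.card ι * Net.cost (weight ρ) S := by
          simp [hcost, E, Fintype.card_piFinset]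

theorem ediam_cell_le [Fintype ι] (k : ℕ) (c : ι → ℤ) :
    ediam {x : ι → ℝ | code k x = c} ≤ (2⁻¹ : ℝ≥0∞) ^ k := by
  refine ediam_le fun x hx y hy => ?_
  have hxy : code k x = code k y := Eq.trans hx (Eq.symm hy)
  have h2 : (2⁻¹ : ℝ≥0∞) ^ k = ENNReal.ofReal ((1 / 2) ^ k) := by
    rw [ENNReal.ofReal_pow (by norm_num), one_div, ENNReal.ofReal_inv_of_pos (by norm_num)]
    simp
  rw [h2, edist_dist]
  refine ENNReal.ofReal_le_ofReal ((dist_pi_le_iff (by positivity)).2 fun i => ?_)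
  have hi : ⌊2 ^ k * x i⌋ = ⌊2 ^ k * y i⌋ := congrFun hxy i
  have h1 := (Int.abs_sub_lt_one_of_floor_eq_floor hi).le
  rw [← mul_sub, abs_mul, abs_of_pos (by positivity)] at h1
  rw [Real.dist_eq, one_div, inv_pow, ← one_div, le_div_iff₀' (by positivity)]
  exact h1

theorem hausdorffMeasure_eq_zero_of_content [Fintype ι] {t : ℝ} (ht : 0 < t) {B : Set (ι → ℝ)}
    (h : Net.content code (weight ((2 : NNReal) ^ (-t))) B = 0) : μH[t] B = 0 := by
  set ρ : NNReal := (2 : NNReal) ^ (-t) with hρ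
  have hpow : ∀ k : ℕ, ((2⁻¹ : ℝ≥0∞) ^ k) ^ t = (ρ : ℝ≥0∞) ^ k := fun k => by
    rw [hρ, ENNReal.coe_rpow_of_ne_zero (by norm_num), ← ENNReal.rpow_natCast,
      ← ENNReal.rpow_natCast, ← ENNReal.rpow_mul, ← ENNReal.rpow_mul, ENNReal.inv_rpow,
      ← ENNReal.rpow_neg]
    congr 1
    ring
  let ε : ℕ → ℝ≥0∞ := fun n => ((n : ℝ≥0∞) + 1)⁻¹
  have hε : ∀ n, 0 < ε n := fun n => ENNReal.inv_pos.2 (by finiteness)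
  have hεlim : Filter.Tendsto ε Filter.atTop (nhds 0) := by
    have := (Filter.tendsto_add_atTop_iff_nat 1).2 ENNReal.tendsto_inv_nat_nhds_zero
    simpa [ε] using this
  have hex : ∀ n, ∃ S, Net.Covers code S B ∧ Net.cost (weight ρ) S < ε n := fun n =>
    Net.exists_cost_lt (h ▸ hε n)
  choose S hS hcost using hex
  have hsum : ∀ n, ∑' p : S n, (ρ : ℝ≥0∞) ^ p.1.1 = Net.cost (weight ρ) (S n) := fun n =>
    tsum_subtype (S n) (weight ρ)
  have hle := Measure.hausdorffMeasure_le_liminf_tsum (β := ℕ) (ι := fun n => S n) t B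
    (l := Filter.atTop) (fun n => ε n ^ t⁻¹)
    (by
      have := (ENNReal.continuous_rpow_const (y := t⁻¹)).tendsto 0 |>.comp hεlim
      rwa [ENNReal.zero_rpow_of_pos (inv_pos.2 ht)] at this)
    (fun n p => {x | code p.1.1 x = p.1.2})
    (Filter.Eventually.of_forall fun n p => by
      refine (ediam_cell_le _ _).trans ?_
      rw [ENNReal.le_rpow_inv_iff ht, hpow]
      refine le_trans ?_ (hcost n).le
      rw [← hsum]
      exact ENNReal.le_tsum (f := fun p : S n => (ρ : ℝ≥0∞) ^ p.1.1) p)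
    (Filter.Eventually.of_forall fun n x hx => by
      obtain ⟨k, hk⟩ := hS n x hx
      exact mem_iUnion.2 ⟨⟨_, hk⟩, rfl⟩)
  refine le_antisymm (hle.trans ?_) zero_le
  rw [← hεlim.liminf_eq]
  refine Filter.liminf_le_liminf (Filter.Eventually.of_forall fun n => ?_)
  refine le_trans (ENNReal.tsum_le_tsum fun p => ?_) ((hsum n).trans_le (hcost n).le)
  rw [← hpow]
  exact ENNReal.rpow_le_rpow (ediam_cell_le _ _) ht.le

end DyadicCube

open DyadicCube in
/-- **Frostman's lemma** for Borel sets, with balls of dyadic radius. -/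
theorem exists_frostman_measure {ι : Type*} [Fintype ι] {B : Set (ι → ℝ)} (hB : MeasurableSet B)
    {t : ℝ} (ht : 0 < t) (hBt : μH[t] B ≠ 0) :
    ∃ K ⊆ B, IsCompact K ∧ ∃ μ : Measure (ι → ℝ), IsFiniteMeasure μ ∧ μ ≠ 0 ∧ μ Kᶜ = 0 ∧
      ∃ M : NNReal, ∀ x (k : ℕ),
        μ (closedBall x ((1 / 2) ^ k)) ≤ M * (((2 : NNReal) ^ (-t) : NNReal) : ℝ≥0∞) ^ k := by
  classical
  set ρ : NNReal := (2 : NNReal) ^ (-t) with hρ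
  have hcont : Net.content code (weight ρ) B ≠ 0 := fun h =>
    hBt (hausdorffMeasure_eq_zero_of_content ht h)
  obtain ⟨f, hf, rfl⟩ : ∃ f : (ℕ → ℕ) → ι → ℝ, Continuous f ∧ range f = B := by
    have := hB.analyticSet
    rw [AnalyticSet] at this
    rcases this with rfl | h
    · exact (hcont Net.content_empty).elim
    · exact h
  obtain ⟨c, hc0, hc⟩ := ENNReal.lt_iff_exists_nnreal_btwn.1 (pos_iff_ne_zero.2 hcont)
  obtain ⟨K, hKB, hK, hKc⟩ := exists_isCompact_forall_isOpen_le
    (φ := Net.content code (weight ρ)) (fun _ _ h => Net.content_mono h)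
    (fun A hA => Net.content_iUnion_le code_eq_of_le hA) hf hc
  set m : NNReal := c / 3 ^ Fintype.card ι with hm
  have hm0 : 0 < m := by
    have : 0 < c := by exact_mod_cast hc0
    positivity
  have hmK : (m : ℝ≥0∞) ≤ Net.content code (weight ρ) K := by
    refine le_iInf₂ fun S hS => ?_
    obtain ⟨U, hU, hKU, hle⟩ := exists_isOpen_content_le ρ hS
    rw [hm, ENNReal.coe_div (by positivity)]
    refine ENNReal.div_le_of_le_mul' ?_
    push_cast
    exact (hKc U hU hKU).trans hle
  have : Nonempty K := by
    by_contra hne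
    rw [not_nonempty_iff, isEmpty_coe_sort] at hne
    rw [hne, Net.content_empty] at hmK
    exact hm0.ne' (by exact_mod_cast le_antisymm hmK zero_le)
  have : CompactSpace K := isCompact_iff_compactSpace.1 hK
  obtain ⟨R, hR⟩ := hK.isBounded.subset_closedBall 0
  obtain ⟨μ, hμfin, hμm, hμ⟩ := exists_measure_of_weighted_covers (K := K)
    (fun p : ℕ × (ι → ℤ) => {x : K | code p.1 x.1 = p.2}) (fun p => (ρ : ℝ) ^ p.1)
    (fun p => by positivity)
    ((Fintype.piFinset fun _ : ι => Finset.Icc ⌊-R⌋ ⌊R⌋).image fun c => (0, c))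
    (fun x => by
      refine ⟨(0, code 0 x.1), Finset.mem_image.2 ⟨_, Fintype.mem_piFinset.2 fun i => ?_, rfl⟩, rfl⟩
      have h1 : |x.1 i| ≤ R := by
        have := mem_closedBall_zero_iff.1 (hR x.2)
        exact (norm_le_pi_norm x.1 i).trans this
      rw [abs_le] at h1
      simp only [code, pow_zero, one_mul, Finset.mem_Icc]
      exact ⟨Int.floor_mono h1.1, Int.floor_mono h1.2⟩)
    (m := m) m.2 (fun c hc => by
      have h := Net.mul_content_le_sum (w := weight ρ) (B := K) code_eq_of_le c.support c 1
        (fun x hx => by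
          have := hc ⟨x, hx⟩
          rw [← NNReal.coe_le_coe]
          push_cast
          rw [Finset.sum_filter]
          refine this.trans (le_of_eq (Finset.sum_congr rfl fun p _ => ?_))
          by_cases hp : code p.1 x = p.2 <;> simp [hp])
      rw [ENNReal.coe_one, one_mul] at h
      have h' := hmK.trans h
      simp only [weight] at h'
      have h'' : m ≤ ∑ p ∈ c.support, c p * ρ ^ p.1 := by exact_mod_cast h'
      exact_mod_cast h'')
  refine ⟨K, hKB, hK, μ.map Subtype.val, inferInstance, ?_, ?_, 5 ^ Fintype.card ι, ?_⟩
  · intro h0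
    rw [Measure.map_eq_zero_iff measurable_subtype_coe.aemeasurable] at h0
    rw [h0] at hμm
    simp at hμm
    exact hm0.ne' hμm
  · rw [Measure.map_apply measurable_subtype_coe hK.measurableSet.compl]
    simp
  · intro x k
    rw [Measure.map_apply measurable_subtype_coe measurableSet_closedBall]
    refine (hμ _ (Subtype.val ⁻¹' ball x (2 * (1 / 2) ^ k))
      (isClosed_closedBall.preimage continuous_subtype_val).isCompact
      (isOpen_ball.preimage continuous_subtype_val)
      (preimage_mono (closedBall_subset_ball (by
        have : (0 : ℝ) < (1 / 2) ^ k := by positivity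
        linarith)))
      ((Fintype.piFinset fun i : ι => Finset.Icc (code k x i - 2) (code k x i + 2)).image
        fun c => (k, c)) ?_).trans ?_
    · intro y hy
      refine ⟨(k, code k y.1), Finset.mem_image.2 ⟨_, Fintype.mem_piFinset.2 fun i => ?_, rfl⟩, rfl⟩
      have h1 : |y.1 i - x i| < 2 * (1 / 2) ^ k :=
        (norm_le_pi_norm (y.1 - x) i).trans_lt (mem_ball_iff_norm.1 hy)
      have h2 : |2 ^ k * y.1 i - 2 ^ k * x i| < 2 := by
        rw [← mul_sub, abs_mul, abs_of_pos (by positivity)]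
        calc (2 : ℝ) ^ k * |y.1 i - x i| < 2 ^ k * (2 * (1 / 2) ^ k) := by gcongr
          _ = 2 := by rw [one_div, inv_pow]; field_simp
      rw [abs_lt] at h2
      simp only [code, Finset.mem_Icc]
      constructor
      · refine Int.le_floor.2 ?_
        push_cast
        linarith [Int.floor_le (2 ^ k * x i)]
      · refine Int.lt_add_one_iff.1 (Int.floor_lt.2 ?_)
        push_cast
        linarith [Int.lt_floor_add_one (2 ^ k * x i)]
    · rw [Finset.sum_image (fun _ _ _ _ h => (Prod.mk.inj h).2)]
      simp only [Finset.sum_const, Fintype.card_piFinset, Int.card_Icc, nsmul_eq_mul]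
      have h5 : ∀ i, (code k x i + 2 + 1 - (code k x i - 2)).toNat = 5 := fun i => by
        ring_nf; rfl
      simp only [h5, Finset.prod_const, Finset.card_univ]
      rw [ENNReal.ofReal_mul (by positivity), ENNReal.ofReal_pow (by positivity)]
      simp

/-! ### Projections along lines -/

section Shear

variable {ι : Type*}

/-- The projection along the direction that has coordinate `1` at `i` and coordinates `a`
elsewhere. -/
def shear (i : ι) (a : {j // j ≠ i} → ℝ) (x : ι → ℝ) : {j // j ≠ i} → ℝ :=
  fun j => x j - a j * x i

@[fun_prop]
theorem continuous_shear (i : ι) :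
    Continuous fun p : ({j // j ≠ i} → ℝ) × (ι → ℝ) => shear i p.1 p.2 := by
  unfold shear
  fun_prop

theorem shear_sub (i : ι) (a : {j // j ≠ i} → ℝ) (x y : ι → ℝ) :
    shear i a (x - y) = shear i a x - shear i a y := by
  funext j
  simp only [shear, Pi.sub_apply]
  ring

variable [Fintype ι]

theorem setOf_norm_shear_le [DecidableEq ι] {i : ι} {z : ι → ℝ} (hz : z i ≠ 0) {δ : ℝ}
    (hδ : 0 ≤ δ) :
    {a | ‖shear i a z‖ ≤ δ} = closedBall (fun j : {j // j ≠ i} => z j / z i) (δ / |z i|) := by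
  ext a
  have hzi : 0 < |z i| := abs_pos.2 hz
  rw [mem_closedBall, dist_pi_le_iff (by positivity)]
  change ‖shear i a z‖ ≤ δ ↔ _
  rw [pi_norm_le_iff_of_nonneg hδ]
  refine forall_congr' fun j => ?_
  rw [Real.dist_eq, le_div_iff₀ hzi, ← abs_mul, shear, Real.norm_eq_abs, sub_mul,
    div_mul_cancel₀ _ hz, abs_sub_comm]

theorem volume_norm_shear_le [DecidableEq ι] (i : ι) {R : ℝ} (hR : 0 ≤ R) {z : ι → ℝ} (hz : z ≠ 0)
    {δ : ℝ} (hδ : 0 < δ) :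
    volume ({a | ‖shear i a z‖ ≤ δ} ∩ closedBall 0 R) ≤
      ENNReal.ofReal ((4 * (1 + R) * δ * ‖z‖⁻¹) ^ Fintype.card {j // j ≠ i}) := by
  have hz0 : 0 < ‖z‖ := norm_pos_iff.2 hz
  have hRp : 0 < 2 * (1 + R) := by positivity
  by_cases hi : ‖z‖ / (2 * (1 + R)) ≤ |z i|
  · have hzi : 0 < |z i| := lt_of_lt_of_le (by positivity) hi
    refine (measure_mono inter_subset_left).trans ?_
    rw [setOf_norm_shear_le (abs_pos.1 hzi) hδ.le, Real.volume_pi_closedBall _ (by positivity)]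
    refine ENNReal.ofReal_le_ofReal (pow_le_pow_left₀ (by positivity) ?_ _)
    rw [← mul_div_assoc, div_le_iff₀ hzi]
    rw [div_le_iff₀ hRp] at hi
    calc 2 * δ = 2 * δ * ‖z‖⁻¹ * ‖z‖ := by field_simp
      _ ≤ 2 * δ * ‖z‖⁻¹ * (|z i| * (2 * (1 + R))) := by gcongr
      _ = _ := by ring
  · push Not at hi
    rcases eq_empty_or_nonempty ({a | ‖shear i a z‖ ≤ δ} ∩ closedBall 0 R) with h | ⟨a, ha, haR⟩
    · rw [h]; simp
    have hδz : ‖z‖ / 2 ≤ δ := by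
      by_contra! hlt
      have haR' : ‖a‖ ≤ R := mem_closedBall_zero_iff.1 haR
      have hbd : ‖z‖ ≤ ‖z‖ / 2 + δ - (‖z‖/2 - R * (‖z‖ / (2 * (1 + R)))) ∨ ‖z‖ ≤ |z i| := by
        by_contra! hcon
        have hpos : 0 ≤ ‖z‖ / 2 + δ - (‖z‖/2 - R * (‖z‖ / (2 * (1 + R)))) := by
          have : 0 ≤ R * (‖z‖ / (2 * (1 + R))) := by positivity
          linarith
        have : ‖z‖ ≤ max (‖z‖ / 2 + δ - (‖z‖/2 - R * (‖z‖ / (2 * (1 + R))))) |z i| := by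
          rw [pi_norm_le_iff_of_nonneg (le_max_of_le_left hpos)]
          intro j
          by_cases hj : j = i
          · subst hj; exact le_max_right _ _
          · refine le_max_of_le_left ?_
            have h1 : |z j - a ⟨j, hj⟩ * z i| ≤ δ :=
              (norm_le_pi_norm (shear i a z) ⟨j, hj⟩).trans ha
            have h2 : |a ⟨j, hj⟩ * z i| ≤ R * (‖z‖ / (2 * (1 + R))) := by
              rw [abs_mul]
              exact mul_le_mul ((norm_le_pi_norm a ⟨j, hj⟩).trans haR') hi.le (abs_nonneg _) hR
            have h3 := abs_add_le (z j - a ⟨j, hj⟩ * z i) (a ⟨j, hj⟩ * z i)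
            rw [sub_add_cancel] at h3
            rw [Real.norm_eq_abs]
            linarith
        exact absurd this (not_le.2 (max_lt hcon.1 hcon.2))
      have h4 : R * (‖z‖ / (2 * (1 + R))) ≤ ‖z‖ / 2 := by
        rw [← mul_div_assoc, div_le_div_iff₀ hRp (by norm_num)]
        nlinarith
      have h5 : ‖z‖ / (2 * (1 + R)) ≤ ‖z‖ := div_le_self hz0.le (by linarith)
      rcases hbd with h | h <;> linarith
    refine (measure_mono inter_subset_right).trans ?_
    rw [Real.volume_pi_closedBall _ hR]
    refine ENNReal.ofReal_le_ofReal (pow_le_pow_left₀ (by positivity) ?_ _)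
    rw [← div_eq_mul_inv, le_div_iff₀ hz0]
    nlinarith

/-- A dyadic majorant of the Riesz kernel `‖z‖⁻ᵐ`. -/
noncomputable def dyadicKernel (m : ℕ) (z : ι → ℝ) : ℝ≥0∞ :=
  1 + ∑' k : ℕ, (closedBall (0 : ι → ℝ) ((1 / 2) ^ k)).indicator (fun _ => (2 ^ m : ℝ≥0∞) ^ k) z

theorem measurable_dyadicKernel (m : ℕ) : Measurable (dyadicKernel (ι := ι) m) := by
  unfold dyadicKernel
  exact (Measurable.tsum fun k =>
    measurable_const.indicator measurableSet_closedBall).const_add _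

theorem dyadicKernel_zero (m : ℕ) : dyadicKernel m (0 : ι → ℝ) = ∞ := by
  have : ∑' k : ℕ, (closedBall (0 : ι → ℝ) ((1 / 2) ^ k)).indicator
      (fun _ => (2 ^ m : ℝ≥0∞) ^ k) 0 = ∞ := by
    rw [eq_top_iff, ← ENNReal.tsum_const_eq_top_of_ne_zero (α := ℕ) one_ne_zero]
    refine ENNReal.tsum_le_tsum fun k => ?_
    rw [indicator_of_mem (mem_closedBall_self (by positivity))]
    exact one_le_pow₀ (one_le_pow₀ (by norm_num))
  rw [dyadicKernel, this, add_top]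

theorem ofReal_inv_norm_pow_le (m : ℕ) {z : ι → ℝ} (hz : z ≠ 0) :
    ENNReal.ofReal (‖z‖⁻¹ ^ m) ≤ 2 ^ m * dyadicKernel m z := by
  have hz0 : 0 < ‖z‖ := norm_pos_iff.2 hz
  rcases le_or_gt 1 ‖z‖ with h | h
  · have h1 : ENNReal.ofReal (‖z‖⁻¹ ^ m) ≤ 1 :=
      ENNReal.ofReal_le_one.2 (pow_le_one₀ (by positivity) (inv_le_one_of_one_le₀ h))
    refine h1.trans (one_le_mul (one_le_pow₀ (by norm_num)) ?_)
    exact le_self_add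
  · obtain ⟨k, hk1, hk2⟩ := exists_nat_pow_near_of_lt_one hz0 h.le
      (y := (1 / 2 : ℝ)) (by norm_num) (by norm_num)
    have h1 : ENNReal.ofReal (‖z‖⁻¹ ^ m) ≤ 2 ^ m * (2 ^ m : ℝ≥0∞) ^ k := by
      have : (2 ^ m * (2 ^ m) ^ k : ℝ≥0∞) = ENNReal.ofReal (2 ^ m * (2 ^ m) ^ k) := by
        rw [ENNReal.ofReal_mul (by positivity), ENNReal.ofReal_pow (by positivity),
          ENNReal.ofReal_pow (by positivity), ENNReal.ofReal_pow (by positivity)]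
        simp
      rw [this]
      refine ENNReal.ofReal_le_ofReal ?_
      calc ‖z‖⁻¹ ^ m ≤ (((1 / 2 : ℝ) ^ (k + 1))⁻¹) ^ m := by gcongr
        _ = 2 ^ m * (2 ^ m) ^ k := by
          rw [one_div, inv_pow 2 (k + 1), inv_inv, ← pow_mul, ← pow_mul, ← pow_add]
          congr 1
          ring
    refine h1.trans (mul_le_mul_right ?_ _)
    refine le_trans ?_ le_add_self
    refine le_trans ?_ (ENNReal.le_tsum k)
    rw [indicator_of_mem (mem_closedBall_zero_iff.2 hk2)]

theorem volume_norm_shear_le_dyadicKernel [DecidableEq ι] (i : ι) {R : ℝ} (hR : 0 ≤ R)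
    (z : ι → ℝ) {δ : ℝ} (hδ : 0 < δ) :
    volume ({a | ‖shear i a z‖ ≤ δ} ∩ closedBall 0 R) ≤
      ENNReal.ofReal ((8 * (1 + R) * δ) ^ Fintype.card {j // j ≠ i}) *
        dyadicKernel (Fintype.card {j // j ≠ i}) z := by
  set m := Fintype.card {j // j ≠ i}
  rcases eq_or_ne z 0 with rfl | hz
  · rw [dyadicKernel_zero, ENNReal.mul_top]
    · exact le_top
    · exact (ENNReal.ofReal_pos.2 (by positivity)).ne'
  · refine (volume_norm_shear_le i hR hz hδ).trans ?_
    rw [mul_pow, ENNReal.ofReal_mul (by positivity)]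
    refine (mul_le_mul_right (ofReal_inv_norm_pow_le m hz) _).trans (le_of_eq ?_)
    rw [← mul_assoc]
    congr 1
    have : (2 ^ m : ℝ≥0∞) = ENNReal.ofReal (2 ^ m) := by
      rw [ENNReal.ofReal_pow (by positivity)]; simp
    rw [this, ← ENNReal.ofReal_mul (by positivity), ← mul_pow]
    congr 2
    ring

theorem exists_lintegral_dyadicKernel_le {μ : Measure (ι → ℝ)} [IsFiniteMeasure μ] {m : ℕ} {t : ℝ}
    (ht : m < t) {M : NNReal} (hμ : ∀ x (k : ℕ),
      μ (closedBall x ((1 / 2) ^ k)) ≤ M * (((2 : NNReal) ^ (-t) : NNReal) : ℝ≥0∞) ^ k) :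
    ∃ E : ℝ≥0∞, E ≠ ∞ ∧ ∀ x, ∫⁻ y, dyadicKernel m (x - y) ∂μ ≤ E := by
  set ρ : NNReal := (2 : NNReal) ^ (-t) with hρ
  have hlt : 2 ^ m * ρ < 1 := by
    rw [hρ, ← NNReal.rpow_natCast, ← NNReal.rpow_add (by norm_num)]
    exact NNReal.rpow_lt_one_of_one_lt_of_neg (by norm_num) (by linarith)
  refine ⟨μ univ + ∑' k : ℕ, M * ((2 ^ m * ρ : NNReal) : ℝ≥0∞) ^ k, ?_, fun x => ?_⟩
  · refine ENNReal.add_ne_top.2 ⟨measure_ne_top _ _, ?_⟩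
    rw [ENNReal.tsum_mul_left]
    refine ENNReal.mul_ne_top (by simp) ?_
    rw [ENNReal.tsum_geometric]
    refine ENNReal.inv_ne_top.2 (tsub_pos_of_lt ?_).ne'
    exact_mod_cast hlt
  · unfold dyadicKernel
    rw [lintegral_add_left measurable_const, lintegral_one]
    gcongr
    have : ∀ (k : ℕ) y, (closedBall (0 : ι → ℝ) ((1 / 2) ^ k)).indicator
        (fun _ => (2 ^ m : ℝ≥0∞) ^ k) (x - y) =
        (closedBall x ((1 / 2) ^ k)).indicator (fun _ => (2 ^ m : ℝ≥0∞) ^ k) y := fun k y => by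
      have h : x - y ∈ closedBall (0 : ι → ℝ) ((1 / 2) ^ k) ↔ y ∈ closedBall x ((1 / 2) ^ k) := by
        rw [mem_closedBall_zero_iff, mem_closedBall, dist_comm, dist_eq_norm]
      by_cases hy : y ∈ closedBall x ((1 / 2) ^ k)
      · rw [indicator_of_mem hy, indicator_of_mem (h.2 hy)]
      · rw [indicator_of_notMem hy, indicator_of_notMem (mt h.1 hy)]
    simp_rw [this]
    rw [lintegral_tsum fun k =>
      (measurable_const.indicator measurableSet_closedBall).aemeasurable]
    refine ENNReal.tsum_le_tsum fun k => ?_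
    rw [lintegral_indicator_const measurableSet_closedBall]
    calc (2 ^ m : ℝ≥0∞) ^ k * μ (closedBall x ((1 / 2) ^ k))
        ≤ (2 ^ m : ℝ≥0∞) ^ k * (M * (ρ : ℝ≥0∞) ^ k) := by gcongr; exact hμ x k
      _ = M * ((2 ^ m * ρ : NNReal) : ℝ≥0∞) ^ k := by push_cast; rw [mul_pow]; ring

variable [DecidableEq ι]

theorem isClosed_norm_shear_sub_le (i : ι) (δ : ℝ) :
    IsClosed {q : (({j // j ≠ i} → ℝ) × ({j // j ≠ i} → ℝ)) × (ι → ℝ) |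
      ‖shear i q.1.1 q.2 - q.1.2‖ ≤ δ} := by
  have := (continuous_shear i).comp
    (f := fun q : (({j // j ≠ i} → ℝ) × ({j // j ≠ i} → ℝ)) × (ι → ℝ) => (q.1.1, q.2))
    (by fun_prop)
  exact isClosed_le (this.sub (by fun_prop)).norm continuous_const

/-- The second moment of the measure of a `δ`-tube is bounded by the energy of the measure. -/
theorem lintegral_measure_tube_sq_le (i : ι) {R : ℝ} (hR : 0 ≤ R) {μ : Measure (ι → ℝ)}
    [IsFiniteMeasure μ] {E : ℝ≥0∞}
    (hE : ∀ x, ∫⁻ y, dyadicKernel (Fintype.card {j // j ≠ i}) (x - y) ∂μ ≤ E)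
    {δ : ℝ} (hδ : 0 < δ) :
    ∫⁻ p, μ {x | ‖shear i p.1 x - p.2‖ ≤ δ} ^ 2 ∂((volume.restrict (closedBall 0 R)).prod volume) ≤
      ENNReal.ofReal (δ ^ Fintype.card {j // j ≠ i}) ^ 2 *
        (ENNReal.ofReal ((32 * (1 + R)) ^ Fintype.card {j // j ≠ i}) * (E * μ univ)) := by
  set m := Fintype.card {j // j ≠ i}
  set β : Measure (({j // j ≠ i} → ℝ) × ({j // j ≠ i} → ℝ)) :=
    (volume.restrict (closedBall 0 R)).prod volume
  let S := {q : (({j // j ≠ i} → ℝ) × ({j // j ≠ i} → ℝ)) × (ι → ℝ) |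
      ‖shear i q.1.1 q.2 - q.1.2‖ ≤ δ}
  have hS : IsClosed S := isClosed_norm_shear_sub_le i δ
  let T : Set ((({j // j ≠ i} → ℝ) × ({j // j ≠ i} → ℝ)) × ((ι → ℝ) × (ι → ℝ))) :=
    {q | (q.1, q.2.1) ∈ S ∧ (q.1, q.2.2) ∈ S}
  have hT : MeasurableSet T :=
    ((hS.preimage (by fun_prop : Continuous fun q : (({j // j ≠ i} → ℝ) × ({j // j ≠ i} → ℝ)) ×
      ((ι → ℝ) × (ι → ℝ)) => (q.1, q.2.1))).inter
      (hS.preimage (by fun_prop : Continuous fun q : (({j // j ≠ i} → ℝ) × ({j // j ≠ i} → ℝ)) ×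
      ((ι → ℝ) × (ι → ℝ)) => (q.1, q.2.2)))).measurableSet
  have hslice : ∀ x y, β ((fun p => (p, (x, y))) ⁻¹' T) ≤
      ENNReal.ofReal (δ ^ m) ^ 2 * (ENNReal.ofReal ((32 * (1 + R)) ^ m) *
        dyadicKernel m (x - y)) := by
    intro x y
    have hTm : MeasurableSet ((fun p => (p, (x, y))) ⁻¹' T) :=
      (measurable_id.prodMk measurable_const) hT
    rw [Measure.prod_apply hTm]
    have hcl : MeasurableSet {a | ‖shear i a (x - y)‖ ≤ 2 * δ} := by
      have := (continuous_shear i).comp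
        (f := fun a : ({j // j ≠ i} → ℝ) => (a, x - y)) (by fun_prop)
      exact (isClosed_le this.norm continuous_const).measurableSet
    calc ∫⁻ a in closedBall 0 R, volume (Prod.mk a ⁻¹' ((fun p => (p, (x, y))) ⁻¹' T))
        ≤ ∫⁻ a in closedBall 0 R, {a | ‖shear i a (x - y)‖ ≤ 2 * δ}.indicator
            (fun _ => ENNReal.ofReal ((2 * δ) ^ m)) a := by
          refine lintegral_mono fun a => ?_
          rcases eq_empty_or_nonempty (Prod.mk a ⁻¹' ((fun p => (p, (x, y))) ⁻¹' T)) with h | ⟨u, hu⟩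
          · rw [h, measure_empty]; exact zero_le
          · have h1 : ‖shear i a x - u‖ ≤ δ := hu.1
            have h2 : ‖shear i a y - u‖ ≤ δ := hu.2
            have h3 : ‖shear i a (x - y)‖ ≤ 2 * δ := by
              rw [shear_sub]
              have := norm_sub_le (shear i a x - u) (shear i a y - u)
              rw [sub_sub_sub_cancel_right] at this
              linarith
            rw [indicator_of_mem (show a ∈ {a | ‖shear i a (x - y)‖ ≤ 2 * δ} from h3),
              ← Real.volume_pi_closedBall (shear i a x) hδ.le]
            refine measure_mono fun w hw => ?_
            rw [mem_closedBall, dist_comm, dist_eq_norm]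
            exact hw.1
      _ = ENNReal.ofReal ((2 * δ) ^ m) *
            volume ({a | ‖shear i a (x - y)‖ ≤ 2 * δ} ∩ closedBall 0 R) := by
          rw [lintegral_indicator_const hcl, Measure.restrict_apply hcl]
      _ ≤ ENNReal.ofReal ((2 * δ) ^ m) *
            (ENNReal.ofReal ((8 * (1 + R) * (2 * δ)) ^ m) * dyadicKernel m (x - y)) := by
          gcongr
          exact volume_norm_shear_le_dyadicKernel i hR _ (by positivity)
      _ = _ := by
          rw [← mul_assoc, ← mul_assoc (_ ^ 2), ← ENNReal.ofReal_pow (by positivity),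
            ← ENNReal.ofReal_mul (by positivity), ← ENNReal.ofReal_mul (by positivity)]
          congr 2
          rw [← mul_pow, ← pow_mul, mul_comm m 2, pow_mul, ← mul_pow]
          congr 1
          ring
  have hker : Measurable fun q : (ι → ℝ) × (ι → ℝ) => dyadicKernel m (q.1 - q.2) :=
    (measurable_dyadicKernel m).comp (measurable_fst.sub measurable_snd)
  calc ∫⁻ p, μ {x | ‖shear i p.1 x - p.2‖ ≤ δ} ^ 2 ∂β
      = ∫⁻ p, (μ.prod μ) (Prod.mk p ⁻¹' T) ∂β := by
        refine lintegral_congr fun p => ?_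
        rw [sq, ← Measure.prod_prod]
        rfl
    _ = ∫⁻ q, β ((fun p => (p, q)) ⁻¹' T) ∂(μ.prod μ) := by
        rw [← Measure.prod_apply hT, Measure.prod_apply_symm hT]
    _ ≤ ∫⁻ q, ENNReal.ofReal (δ ^ m) ^ 2 * (ENNReal.ofReal ((32 * (1 + R)) ^ m) *
          dyadicKernel m (q.1 - q.2)) ∂(μ.prod μ) := lintegral_mono fun q => hslice q.1 q.2
    _ = ENNReal.ofReal (δ ^ m) ^ 2 * (ENNReal.ofReal ((32 * (1 + R)) ^ m) *
          ∫⁻ x, ∫⁻ y, dyadicKernel m (x - y) ∂μ ∂μ) := by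
        rw [lintegral_const_mul _ (hker.const_mul _), lintegral_const_mul _ hker,
          lintegral_prod _ hker.aemeasurable]
    _ ≤ _ := by
        gcongr
        refine (lintegral_mono hE).trans ?_
        rw [lintegral_const]

end Shear

theorem LowerSemicontinuous.le_liminf_average {V : Type*} [Fintype V] {g : (V → ℝ) → ℝ≥0∞}
    (hg : LowerSemicontinuous g) (u : V → ℝ) :
    g u ≤ Filter.liminf (fun k : ℕ => (ENNReal.ofReal ((2 * (1 / 2) ^ k) ^ Fintype.card V))⁻¹ *
      ∫⁻ w in closedBall u ((1 / 2) ^ k), g w) Filter.atTop := by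
  refine le_of_forall_lt fun c hc => ?_
  obtain ⟨c', hcc', hc'⟩ := exists_between hc
  refine hcc'.trans_le ?_
  refine Filter.le_liminf_of_le (by isBoundedDefault) ?_
  obtain ⟨ε, hε, hball⟩ := Metric.eventually_nhds_iff.1 (hg u c' hc')
  obtain ⟨N, hN⟩ := exists_pow_lt_of_lt_one hε (by norm_num : (1 / 2 : ℝ) < 1)
  filter_upwards [Filter.eventually_ge_atTop N] with k hk
  have hpos : ENNReal.ofReal ((2 * (1 / 2) ^ k) ^ Fintype.card V) ≠ 0 :=
    (ENNReal.ofReal_pos.2 (by positivity)).ne'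
  calc c' = (ENNReal.ofReal ((2 * (1 / 2) ^ k) ^ Fintype.card V))⁻¹ *
        ∫⁻ _ in closedBall u ((1 / 2) ^ k), c' := by
        rw [setLIntegral_const, Real.volume_pi_closedBall _ (by positivity), mul_comm c',
          ← mul_assoc, ENNReal.inv_mul_cancel hpos ENNReal.ofReal_ne_top, one_mul]
    _ ≤ _ := by
        refine mul_le_mul_right (setLIntegral_mono' measurableSet_closedBall fun w hw => ?_) _
        refine (hball (lt_of_le_of_lt hw (lt_of_le_of_lt ?_ hN))).le
        exact pow_le_pow_of_le_one (by norm_num) (by norm_num) hk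

theorem lintegral_le_mul_of_forall_lowerSemicontinuous {X : Type*} [TopologicalSpace X]
    [MeasurableSpace X] [BorelSpace X] {Φ β : Measure X} [β.WeaklyRegular] {C : ℝ≥0∞} (hC : C ≠ ∞)
    (h : ∀ f : X → ℝ≥0∞, LowerSemicontinuous f →
      ∫⁻ p, f p ∂Φ ≤ C * (∫⁻ p, f p ^ (2 : ℝ) ∂β) ^ (1 / 2 : ℝ))
    {f : X → ℝ≥0∞} (hf : Measurable f) :
    ∫⁻ p, f p ∂Φ ≤ C * (∫⁻ p, f p ^ (2 : ℝ) ∂β) ^ (1 / 2 : ℝ) := by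
  have key : ∀ ε : ℝ≥0∞, ε ≠ 0 →
      ∫⁻ p, f p ∂Φ ≤ C * (∫⁻ p, f p ^ (2 : ℝ) ∂β + ε) ^ (1 / 2 : ℝ) := by
    intro ε hε
    obtain ⟨g, hfg, hg, hgi⟩ :=
      exists_le_lowerSemicontinuous_lintegral_ge β (fun p => f p ^ (2 : ℝ)) (hf.pow_const _) hε
    have hg' : LowerSemicontinuous fun p => g p ^ (1 / 2 : ℝ) :=
      (ENNReal.continuous_rpow_const (y := 1 / 2)).comp_lowerSemicontinuous hg
        (ENNReal.monotone_rpow_of_nonneg (by norm_num))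
    calc ∫⁻ p, f p ∂Φ ≤ ∫⁻ p, g p ^ (1 / 2 : ℝ) ∂Φ := by
          refine lintegral_mono fun p => ?_
          have := ENNReal.rpow_le_rpow (hfg p) (by norm_num : (0 : ℝ) ≤ 1 / 2)
          rwa [← ENNReal.rpow_mul, mul_one_div_cancel two_ne_zero, ENNReal.rpow_one] at this
      _ ≤ C * (∫⁻ p, (g p ^ (1 / 2 : ℝ)) ^ (2 : ℝ) ∂β) ^ (1 / 2 : ℝ) := h _ hg'
      _ = C * (∫⁻ p, g p ∂β) ^ (1 / 2 : ℝ) := by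
          simp_rw [← ENNReal.rpow_mul, one_div_mul_cancel (two_ne_zero' ℝ), ENNReal.rpow_one]
      _ ≤ _ := by gcongr
  have hlim : Filter.Tendsto
      (fun ε : ℝ≥0∞ => C * (∫⁻ p, f p ^ (2 : ℝ) ∂β + ε) ^ (1 / 2 : ℝ)) (nhdsWithin 0 (Ioi 0))
      (nhds (C * (∫⁻ p, f p ^ (2 : ℝ) ∂β + 0) ^ (1 / 2 : ℝ))) := by
    refine Filter.Tendsto.mono_left ?_ nhdsWithin_le_nhds
    refine ENNReal.Tendsto.const_mul ?_ (Or.inr hC)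
    exact (ENNReal.continuous_rpow_const.tendsto _).comp
      ((continuous_const.add continuous_id).tendsto 0)
  rw [add_zero] at hlim
  refine ge_of_tendsto hlim ?_
  filter_upwards [self_mem_nhdsWithin] with ε hε using key ε (ne_of_gt hε)

/-- A measure whose integral is bounded in `L²` norm has a square integrable density. -/
theorem exists_density_of_lintegral_le {X : Type*} [MeasurableSpace X] {Φ β : Measure X}
    [IsFiniteMeasure Φ] [SigmaFinite β] {C : ℝ≥0∞} (hC : C ≠ ∞)
    (h : ∀ f : X → ℝ≥0∞, Measurable f →
      ∫⁻ p, f p ∂Φ ≤ C * (∫⁻ p, f p ^ (2 : ℝ) ∂β) ^ (1 / 2 : ℝ)) :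
    ∃ g : X → ℝ≥0∞, Measurable g ∧ Φ = β.withDensity g ∧ ∫⁻ p, g p ^ (2 : ℝ) ∂β ≠ ∞ := by
  have hac : Φ ≪ β := by
    refine Measure.AbsolutelyContinuous.mk fun s hs hβ => ?_
    have := h (s.indicator 1) (measurable_one.indicator hs)
    rw [lintegral_indicator_one hs] at this
    have h0 : ∫⁻ p, s.indicator 1 p ^ (2 : ℝ) ∂β = 0 := by
      have : ∀ p, (s.indicator (1 : X → ℝ≥0∞) p) ^ (2 : ℝ) = s.indicator 1 p := fun p => by
        by_cases hp : p ∈ s <;> simp [hp]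
      simp_rw [this]
      rw [lintegral_indicator_one hs, hβ]
    rw [h0, ENNReal.zero_rpow_of_pos (by norm_num), mul_zero] at this
    exact le_antisymm this zero_le
  have hΦ : Φ = β.withDensity (Φ.rnDeriv β) := (Measure.withDensity_rnDeriv_eq Φ β hac).symm
  set g := Φ.rnDeriv β
  have hg : Measurable g := Measure.measurable_rnDeriv Φ β
  refine ⟨g, hg, hΦ, ?_⟩
  have hgi : ∫⁻ p, g p ∂β ≠ ∞ := (Measure.lintegral_rnDeriv_lt_top Φ β).ne
  have hb : ∀ N : ℕ, ∫⁻ p, min (g p) N ^ (2 : ℝ) ∂β ≤ C ^ (2 : ℝ) := by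
    intro N
    have hm : Measurable fun p => min (g p) N := hg.min measurable_const
    set I := ∫⁻ p, min (g p) N ^ (2 : ℝ) ∂β
    have h1 : I ≤ C * I ^ (1 / 2 : ℝ) := by
      refine le_trans ?_ (h _ hm)
      rw [hΦ, lintegral_withDensity_eq_lintegral_mul _ hg hm]
      refine lintegral_mono fun p => ?_
      rw [ENNReal.rpow_two, sq]
      exact mul_le_mul_left (min_le_left _ _) _
    have hI : I ≠ ∞ := by
      refine ne_top_of_le_ne_top (ENNReal.mul_ne_top (ENNReal.natCast_ne_top N) hgi) ?_
      rw [← lintegral_const_mul _ hg]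
      refine lintegral_mono fun p => ?_
      rw [ENNReal.rpow_two, sq]
      exact mul_le_mul' (min_le_right _ _) (min_le_left _ _)
    rcases eq_or_ne I 0 with h0 | h0
    · rw [h0]; exact zero_le
    have hs : I = I ^ (1 / 2 : ℝ) * I ^ (1 / 2 : ℝ) := by
      rw [← ENNReal.rpow_add _ _ h0 hI]; norm_num
    have hs0 : I ^ (1 / 2 : ℝ) ≠ 0 := fun hh => h0 (by rw [hs, hh, zero_mul])
    have hst : I ^ (1 / 2 : ℝ) ≠ ∞ := ENNReal.rpow_ne_top_of_nonneg (by norm_num) hI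
    have h2 : I ^ (1 / 2 : ℝ) ≤ C := by
      have h1' : I ^ (1 / 2 : ℝ) * I ^ (1 / 2 : ℝ) ≤ C * I ^ (1 / 2 : ℝ) := by rwa [← hs]
      exact (ENNReal.mul_le_mul_iff_left hs0 hst).1 h1'
    rw [hs, ENNReal.rpow_two, sq]
    exact mul_le_mul' h2 h2
  have hlim : ∫⁻ p, g p ^ (2 : ℝ) ∂β = ⨆ N : ℕ, ∫⁻ p, min (g p) N ^ (2 : ℝ) ∂β := by
    rw [← lintegral_iSup (fun N => (hg.min measurable_const).pow_const _)
      (fun N N' hN p => by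
        refine ENNReal.rpow_le_rpow (min_le_min_left _ (by exact_mod_cast hN)) (by norm_num))]
    refine lintegral_congr fun p => ?_
    have h2 := (ENNReal.orderIsoRpow 2 two_pos).map_iSup fun N : ℕ => min (g p) N
    have h3 : ⨆ N : ℕ, min (g p) N = g p := by
      rw [← inf_iSup_eq, ENNReal.iSup_natCast, inf_top_eq]
    rw [h3] at h2
    exact h2
  rw [hlim]
  exact ne_top_of_le_ne_top (ENNReal.rpow_ne_top_of_nonneg (by norm_num) hC) (iSup_le hb)

section Shear

theorem measurable_prodMk_shear {ι : Type*} [Fintype ι] (i : ι) :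
    Measurable fun q : ({j // j ≠ i} → ℝ) × (ι → ℝ) => (q.1, shear i q.1 q.2) :=
  (continuous_fst.prodMk (continuous_shear i)).measurable

variable {ι : Type*} [Fintype ι] [DecidableEq ι]

theorem measurable_measure_tube (i : ι) (δ : ℝ) (μ : Measure (ι → ℝ)) [IsFiniteMeasure μ] :
    Measurable fun p : ({j // j ≠ i} → ℝ) × ({j // j ≠ i} → ℝ) =>
      μ {x | ‖shear i p.1 x - p.2‖ ≤ δ} :=
  measurable_measure_prodMk_left (isClosed_norm_shear_sub_le i δ).measurableSet

theorem measurable_lintegral_closedBall_shear (i : ι) (δ : ℝ)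
    {f : ({j // j ≠ i} → ℝ) × ({j // j ≠ i} → ℝ) → ℝ≥0∞} (hf : Measurable f) :
    Measurable fun q : ({j // j ≠ i} → ℝ) × (ι → ℝ) =>
      ∫⁻ w in closedBall (shear i q.1 q.2) δ, f (q.1, w) := by
  have hcl : IsClosed {s : (({j // j ≠ i} → ℝ) × (ι → ℝ)) × ({j // j ≠ i} → ℝ) |
      s.2 ∈ closedBall (shear i s.1.1 s.1.2) δ} :=
    isClosed_le (continuous_snd.dist ((continuous_shear i).comp continuous_fst)) continuous_const
  have h : Measurable ({s : (({j // j ≠ i} → ℝ) × (ι → ℝ)) × ({j // j ≠ i} → ℝ) |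
      s.2 ∈ closedBall (shear i s.1.1 s.1.2) δ}.indicator fun s => f (s.1.1, s.2)) :=
    (hf.comp (by fun_prop)).indicator hcl.measurableSet
  convert h.lintegral_prod_right' (ν := volume) using 2 with q
  rw [← lintegral_indicator measurableSet_closedBall]
  rfl

theorem lintegral_mul_measure_tube (i : ι) (δ : ℝ) (μ : Measure (ι → ℝ)) [IsFiniteMeasure μ]
    (τ : Measure ({j // j ≠ i} → ℝ)) [SFinite τ]
    {f : ({j // j ≠ i} → ℝ) × ({j // j ≠ i} → ℝ) → ℝ≥0∞} (hf : Measurable f) :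
    ∫⁻ p, f p * μ {x | ‖shear i p.1 x - p.2‖ ≤ δ} ∂(τ.prod volume) =
      ∫⁻ q, (∫⁻ w in closedBall (shear i q.1 q.2) δ, f (q.1, w)) ∂(τ.prod μ) := by
  rw [lintegral_prod (fun p => f p * μ {x | ‖shear i p.1 x - p.2‖ ≤ δ})
      (hf.mul (measurable_measure_tube i δ μ)).aemeasurable,
    lintegral_prod _ (measurable_lintegral_closedBall_shear i δ hf).aemeasurable]
  refine lintegral_congr fun a => ?_
  have hcl : IsClosed {s : ({j // j ≠ i} → ℝ) × (ι → ℝ) | ‖shear i a s.2 - s.1‖ ≤ δ} :=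
    (isClosed_norm_shear_sub_le i δ).preimage
      (f := fun s : ({j // j ≠ i} → ℝ) × (ι → ℝ) => ((a, s.1), s.2)) (by fun_prop)
  have h : Measurable ({s : ({j // j ≠ i} → ℝ) × (ι → ℝ) | ‖shear i a s.2 - s.1‖ ≤ δ}.indicator
      fun s => f (a, s.1)) := (hf.comp (by fun_prop)).indicator hcl.measurableSet
  have h1 := lintegral_prod (μ := (volume : Measure ({j // j ≠ i} → ℝ))) (ν := μ) _ h.aemeasurable
  have h2 := lintegral_prod_symm (μ := (volume : Measure ({j // j ≠ i} → ℝ))) (ν := μ) _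
    h.aemeasurable
  refine Eq.trans ?_ ((h1.symm.trans h2).trans ?_)
  · refine lintegral_congr fun u => ?_
    have hm : MeasurableSet {x | ‖shear i a x - u‖ ≤ δ} :=
      (measurable_const.prodMk measurable_id) hcl.measurableSet
    rw [← lintegral_indicator_const hm]
    rfl
  · refine lintegral_congr fun x => ?_
    rw [← lintegral_indicator measurableSet_closedBall]
    refine lintegral_congr fun w => ?_
    have : w ∈ closedBall (shear i a x) δ ↔ ‖shear i a x - w‖ ≤ δ := by
      rw [mem_closedBall, dist_comm, dist_eq_norm]
    by_cases hw : w ∈ closedBall (shear i a x) δ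
    · rw [indicator_of_mem hw, indicator_of_mem (by exact this.1 hw)]
    · rw [indicator_of_notMem hw, indicator_of_notMem (by exact mt this.2 hw)]

/-- The `L²` norm of the measure of a `δ`-tube is `O(δᵐ)`. -/
theorem rpow_lintegral_measure_tube_le (i : ι) {R : ℝ} (hR : 0 ≤ R) {μ : Measure (ι → ℝ)}
    [IsFiniteMeasure μ] {E : ℝ≥0∞} (hEt : E ≠ ∞)
    (hE : ∀ x, ∫⁻ y, dyadicKernel (Fintype.card {j // j ≠ i}) (x - y) ∂μ ≤ E) :
    ∃ C : ℝ≥0∞, C ≠ ∞ ∧ ∀ δ : ℝ, 0 < δ →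
      (∫⁻ p, μ {x | ‖shear i p.1 x - p.2‖ ≤ δ} ^ (2 : ℝ)
        ∂((volume.restrict (closedBall 0 R)).prod volume)) ^ (1 / 2 : ℝ) ≤
      ENNReal.ofReal (δ ^ Fintype.card {j // j ≠ i}) * C := by
  refine ⟨(ENNReal.ofReal ((32 * (1 + R)) ^ Fintype.card {j // j ≠ i}) *
    (E * μ univ)) ^ (1 / 2 : ℝ), ?_, fun δ hδ => ?_⟩
  · exact ENNReal.rpow_ne_top_of_nonneg (by norm_num) (ENNReal.mul_ne_top ENNReal.ofReal_ne_top
      (ENNReal.mul_ne_top hEt (measure_ne_top _ _)))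
  · simp_rw [ENNReal.rpow_two]
    refine (ENNReal.rpow_le_rpow (lintegral_measure_tube_sq_le i hR hE hδ)
      (by norm_num)).trans (le_of_eq ?_)
    rw [ENNReal.mul_rpow_of_nonneg _ _ (by norm_num), ← ENNReal.rpow_two, ← ENNReal.rpow_mul,
      mul_one_div_cancel two_ne_zero, ENNReal.rpow_one]

/-- Almost all projections of a measure of finite energy have a square integrable density. -/
theorem exists_density_map_shear (i : ι) {R : ℝ} (hR : 0 ≤ R) {μ : Measure (ι → ℝ)}
    [IsFiniteMeasure μ] {E : ℝ≥0∞} (hEt : E ≠ ∞)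
    (hE : ∀ x, ∫⁻ y, dyadicKernel (Fintype.card {j // j ≠ i}) (x - y) ∂μ ≤ E) :
    ∃ g : ({j // j ≠ i} → ℝ) × ({j // j ≠ i} → ℝ) → ℝ≥0∞, Measurable g ∧
      Measure.map (fun q => (q.1, shear i q.1 q.2)) ((volume.restrict (closedBall 0 R)).prod μ) =
        ((volume.restrict (closedBall 0 R)).prod volume).withDensity g ∧
      ∫⁻ p, g p ^ (2 : ℝ) ∂((volume.restrict (closedBall 0 R)).prod volume) ≠ ∞ := by
  obtain ⟨C, hC, hCb⟩ := rpow_lintegral_measure_tube_le i hR hEt hE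
  have : IsFiniteMeasure (volume.restrict (closedBall (0 : {j // j ≠ i} → ℝ) R)) :=
    ⟨by rw [Measure.restrict_apply_univ]; exact measure_closedBall_lt_top⟩
  set τ := volume.restrict (closedBall (0 : {j // j ≠ i} → ℝ) R)
  refine exists_density_of_lintegral_le hC fun f hf =>
    lintegral_le_mul_of_forall_lowerSemicontinuous hC (fun f hf => ?_) hf
  rw [lintegral_map hf.measurable (measurable_prodMk_shear i)]
  set m := Fintype.card {j // j ≠ i}
  set c : ℕ → ℝ≥0∞ := fun k => ENNReal.ofReal ((2 * (1 / 2) ^ k) ^ m) with hc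
  calc ∫⁻ q, f (q.1, shear i q.1 q.2) ∂(τ.prod μ)
      ≤ ∫⁻ q, Filter.liminf (fun k : ℕ => (c k)⁻¹ *
          ∫⁻ w in closedBall (shear i q.1 q.2) ((1 / 2) ^ k), f (q.1, w)) Filter.atTop
            ∂(τ.prod μ) :=
        lintegral_mono fun q =>
          (hf.comp (by fun_prop : Continuous fun w => (q.1, w))).le_liminf_average _
    _ ≤ Filter.liminf (fun k : ℕ => ∫⁻ q, (c k)⁻¹ *
          (∫⁻ w in closedBall (shear i q.1 q.2) ((1 / 2) ^ k), f (q.1, w)) ∂(τ.prod μ))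
            Filter.atTop :=
        lintegral_liminf_le fun k =>
          (measurable_lintegral_closedBall_shear i _ hf.measurable).const_mul _
    _ ≤ Filter.liminf (fun _ : ℕ => C * (∫⁻ p, f p ^ (2 : ℝ) ∂(τ.prod volume)) ^ (1 / 2 : ℝ))
          Filter.atTop := by
        refine Filter.liminf_le_liminf (Filter.Eventually.of_forall fun k => ?_)
        have hpos : (0 : ℝ) < (1 / 2) ^ k := by positivity
        have hck : ENNReal.ofReal (((1 / 2) ^ k) ^ m) ≤ c k :=
          ENNReal.ofReal_le_ofReal (pow_le_pow_left₀ hpos.le (by linarith) _)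
        have hck0 : c k ≠ 0 := (ENNReal.ofReal_pos.2 (by positivity)).ne'
        rw [lintegral_const_mul _ (measurable_lintegral_closedBall_shear i _ hf.measurable),
          ← lintegral_mul_measure_tube i _ μ τ hf.measurable]
        have hCS := ENNReal.lintegral_mul_le_Lp_mul_Lq (τ.prod volume)
          Real.HolderConjugate.two_two hf.measurable.aemeasurable
          (measurable_measure_tube i ((1 / 2) ^ k) μ).aemeasurable
        calc (c k)⁻¹ * _ ≤ (c k)⁻¹ * ((∫⁻ p, f p ^ (2 : ℝ) ∂(τ.prod volume)) ^ (1 / 2 : ℝ) *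
              (c k * C)) := by
              refine mul_le_mul_right (hCS.trans (mul_le_mul_right ?_ _)) _
              exact (hCb _ hpos).trans (mul_le_mul_left hck _)
          _ = ((c k)⁻¹ * c k) * (C * (∫⁻ p, f p ^ (2 : ℝ) ∂(τ.prod volume)) ^ (1 / 2 : ℝ)) := by
              ring
          _ = _ := by rw [ENNReal.inv_mul_cancel hck0 ENNReal.ofReal_ne_top, one_mul]
    _ = _ := Filter.liminf_const _

end Shear

section Shear

variable {ι : Type*} [Fintype ι] [DecidableEq ι]

theorem le_volume_norm_shear_le (i : ι) {r B δ : ℝ} (hr : 0 < r) (hB : 0 < B) (hδ : 0 < δ)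
    (hδ1 : δ ≤ 1) {z : ι → ℝ} (hzr : r ≤ |z i|) (hzB : ‖z‖ ≤ B) :
    ENNReal.ofReal ((2 * (δ / B)) ^ Fintype.card {j // j ≠ i}) ≤
      volume.restrict (closedBall 0 ((B + 1) / r)) {a | ‖shear i a z‖ ≤ δ} := by
  have hzi : 0 < |z i| := hr.trans_le hzr
  rw [setOf_norm_shear_le (abs_pos.1 hzi) hδ.le,
    Measure.restrict_eq_self _ (closedBall_subset_closedBall' ?_),
    Real.volume_pi_closedBall _ (by positivity)]
  · refine ENNReal.ofReal_le_ofReal (pow_le_pow_left₀ (by positivity) ?_ _)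
    gcongr
    exact (norm_le_pi_norm z i).trans hzB
  · rw [dist_zero_right]
    have h1 : ‖fun j : {j // j ≠ i} => z j / z i‖ ≤ B / r := by
      rw [pi_norm_le_iff_of_nonneg (by positivity)]
      intro j
      rw [norm_div, Real.norm_eq_abs (z i)]
      gcongr
      exact (norm_le_pi_norm z j).trans hzB
    have h2 : δ / |z i| ≤ 1 / r := by gcongr
    rw [add_div]
    linarith

theorem le_lintegral_measure_tube (i : ι) {μ ν : Measure (ι → ℝ)} [IsFiniteMeasure μ]
    [IsFiniteMeasure ν] {K L : Set (ι → ℝ)} (hμ : μ Kᶜ = 0) (hν : ν Lᶜ = 0)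
    {r B δ : ℝ} (hr : 0 < r) (hB : 0 < B) (hδ : 0 < δ) (hδ1 : δ ≤ 1)
    (hKr : ∀ x ∈ K, ∀ y ∈ L, r ≤ |y i - x i|) (hKB : ∀ x ∈ K, ∀ y ∈ L, ‖y - x‖ ≤ B) :
    ENNReal.ofReal ((2 * (δ / B)) ^ Fintype.card {j // j ≠ i}) * ν univ * μ univ ≤
      ∫⁻ q, ν {y | ‖shear i q.1 y - shear i q.1 q.2‖ ≤ δ}
        ∂((volume.restrict (closedBall 0 ((B + 1) / r))).prod μ) := by
  set τ := volume.restrict (closedBall (0 : {j // j ≠ i} → ℝ) ((B + 1) / r))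
  have hmeas := (measurable_measure_tube i δ ν).comp (measurable_prodMk_shear i)
  have hsymm := lintegral_prod_symm (μ := τ) (ν := μ) _ hmeas.aemeasurable
  simp only [Function.comp_def] at hsymm
  rw [hsymm, ← lintegral_const]
  refine lintegral_mono_ae ?_
  filter_upwards [mem_ae_iff.2 hμ] with x hx
  have hcl : IsClosed {s : ({j // j ≠ i} → ℝ) × (ι → ℝ) |
      ‖shear i s.1 s.2 - shear i s.1 x‖ ≤ δ} :=
    (isClosed_norm_shear_sub_le i δ).preimage
      (f := fun s : ({j // j ≠ i} → ℝ) × (ι → ℝ) => ((s.1, shear i s.1 x), s.2))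
      ((continuous_fst.prodMk ((continuous_shear i).comp
        (continuous_fst.prodMk continuous_const))).prodMk continuous_snd)
  have hswap := (Measure.prod_apply (μ := τ) (ν := ν) hcl.measurableSet).symm.trans
    (Measure.prod_apply_symm hcl.measurableSet)
  refine le_trans ?_ hswap.ge
  rw [← lintegral_const]
  refine lintegral_mono_ae ?_
  filter_upwards [mem_ae_iff.2 hν] with y hy
  refine (le_volume_norm_shear_le i hr hB hδ hδ1 (hKr x hx y hy) (hKB x hx y hy)).trans
    (le_of_eq ?_)
  simp only [shear_sub]
  rfl

/-- If two measures of finite energy are separated in the `i`-th coordinate, then the set carrying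
one of them is visible from some point of any set carrying the other one. -/
theorem eq_zero_or_eq_zero_of_null_shear (i : ι) {μ ν : Measure (ι → ℝ)} [IsFiniteMeasure μ]
    [IsFiniteMeasure ν] {E E' : ℝ≥0∞} (hEt : E ≠ ∞) (hEt' : E' ≠ ∞)
    (hE : ∀ x, ∫⁻ y, dyadicKernel (Fintype.card {j // j ≠ i}) (x - y) ∂μ ≤ E)
    (hE' : ∀ x, ∫⁻ y, dyadicKernel (Fintype.card {j // j ≠ i}) (x - y) ∂ν ≤ E')
    {K L : Set (ι → ℝ)} (hK : IsCompact K) (hL : IsCompact L) (hμ : μ Kᶜ = 0) (hν : ν Lᶜ = 0)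
    {r : ℝ} (hr : 0 < r) (hKr : ∀ x ∈ K, ∀ y ∈ L, r ≤ |y i - x i|)
    (hnull : ∀ x ∈ K, volume {a | ∃ y ∈ L, shear i a x = shear i a y} = 0) :
    μ = 0 ∨ ν = 0 := by
  obtain ⟨B, hB, hKB⟩ : ∃ B > 0, ∀ x ∈ K, ∀ y ∈ L, ‖y - x‖ ≤ B := by
    obtain ⟨b, hb⟩ := hK.isBounded.exists_norm_le
    obtain ⟨b', hb'⟩ := hL.isBounded.exists_norm_le
    refine ⟨max 1 (b' + b), by positivity, fun x hx y hy => le_max_of_le_right ?_⟩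
    exact (norm_sub_le _ _).trans (add_le_add (hb' y hy) (hb x hx))
  have hR : 0 ≤ (B + 1) / r := by positivity
  obtain ⟨g, hg, hΦ, hg2⟩ := exists_density_map_shear i hR hEt hE
  obtain ⟨C, hC, hCb⟩ := rpow_lintegral_measure_tube_le i hR hEt' hE'
  have : IsFiniteMeasure (volume.restrict (closedBall (0 : {j // j ≠ i} → ℝ) ((B + 1) / r))) :=
    ⟨by rw [Measure.restrict_apply_univ]; exact measure_closedBall_lt_top⟩
  set D := closedBall (0 : {j // j ≠ i} → ℝ) ((B + 1) / r) with hD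
  set τ := volume.restrict D with hτ
  set β := τ.prod (volume : Measure ({j // j ≠ i} → ℝ))
  set m := Fintype.card {j // j ≠ i}
  let Z := (fun q : ({j // j ≠ i} → ℝ) × (ι → ℝ) => (q.1, shear i q.1 q.2)) '' (D ×ˢ L)
  have hZ : IsCompact Z := ((isCompact_closedBall _ _).prod hL).image
    (continuous_fst.prodMk (continuous_shear i))
  have hΦZ : β.withDensity g Z = 0 := by
    rw [← hΦ, Measure.map_apply (measurable_prodMk_shear i) hZ.measurableSet,
      Measure.prod_apply_symm (measurable_prodMk_shear i hZ.measurableSet)]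
    refine (lintegral_congr_ae ?_).trans lintegral_zero
    filter_upwards [mem_ae_iff.2 hμ] with x hx
    refine measure_mono_null ?_ (Measure.absolutelyContinuous_of_le Measure.restrict_le_self
      (hnull x hx))
    rintro a ⟨q, hq, hqa⟩
    rw [Prod.mk.injEq] at hqa
    obtain ⟨h1, h2⟩ := hqa
    subst h1
    exact ⟨q.2, hq.2, h2.symm⟩
  set κ := β.withDensity fun p => g p ^ (2 : ℝ) with hκ
  have : IsFiniteMeasure κ := isFiniteMeasure_withDensity hg2
  have hκZ : κ Z = 0 := by
    rw [withDensity_apply _ hZ.measurableSet] at hΦZ ⊢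
    rw [lintegral_eq_zero_iff hg] at hΦZ
    refine (lintegral_congr_ae ?_).trans lintegral_zero
    filter_upwards [hΦZ] with p hp
    rw [hp, Pi.zero_apply, ENNReal.zero_rpow_of_pos two_pos]
  have hbound : ∀ δ : ℝ, 0 < δ → δ ≤ 1 →
      ENNReal.ofReal ((2 / B) ^ m) * ν univ * μ univ ≤
        C * κ (cthickening δ Z) ^ (1 / 2 : ℝ) := by
    intro δ hδ hδ1
    have hδm : ENNReal.ofReal (δ ^ m) ≠ 0 := (ENNReal.ofReal_pos.2 (by positivity)).ne'
    have hZm : MeasurableSet (cthickening δ Z) := isClosed_cthickening.measurableSet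
    have h1 := le_lintegral_measure_tube i hμ hν hr hB hδ hδ1 hKr hKB
    have h2 : ∫⁻ q, ν {y | ‖shear i q.1 y - shear i q.1 q.2‖ ≤ δ} ∂(τ.prod μ) =
        ∫⁻ p, g p * ν {y | ‖shear i p.1 y - p.2‖ ≤ δ} ∂β := by
      have h3 := lintegral_map (μ := τ.prod μ) (measurable_measure_tube i δ ν)
        (measurable_prodMk_shear i)
      rw [hΦ, lintegral_withDensity_eq_lintegral_mul _ hg (measurable_measure_tube i δ ν)] at h3
      exact h3.symm
    have h3 : ∫⁻ p, g p * ν {y | ‖shear i p.1 y - p.2‖ ≤ δ} ∂β ≤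
        ∫⁻ p in cthickening δ Z, g p * ν {y | ‖shear i p.1 y - p.2‖ ≤ δ} ∂β := by
      rw [← lintegral_indicator hZm]
      refine lintegral_mono_ae ?_
      have hD' : ∀ᵐ p ∂β, p.1 ∈ D :=
        Measure.quasiMeasurePreserving_fst.ae (ae_restrict_mem measurableSet_closedBall)
      filter_upwards [hD'] with p hp
      by_cases hpZ : p ∈ cthickening δ Z
      · rw [indicator_of_mem hpZ]
      · have : ν {y | ‖shear i p.1 y - p.2‖ ≤ δ} = 0 := by
          refine measure_mono_null (t := Lᶜ) (fun y hy hyL => hpZ ?_) hν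
          refine mem_cthickening_of_dist_le p (p.1, shear i p.1 y) δ Z ⟨(p.1, y), ⟨hp, hyL⟩, rfl⟩ ?_
          rw [Prod.dist_eq, dist_self, dist_comm, dist_eq_norm]
          exact max_le hδ.le hy
        rw [this, mul_zero]
        exact zero_le
    have hCS := ENNReal.lintegral_mul_le_Lp_mul_Lq (β.restrict (cthickening δ Z))
      Real.HolderConjugate.two_two hg.aemeasurable (measurable_measure_tube i δ ν).aemeasurable
    have h4 : ENNReal.ofReal (δ ^ m) * (ENNReal.ofReal ((2 / B) ^ m) * ν univ * μ univ) ≤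
        ENNReal.ofReal (δ ^ m) * (C * κ (cthickening δ Z) ^ (1 / 2 : ℝ)) := by
      calc _ = ENNReal.ofReal ((2 * (δ / B)) ^ m) * ν univ * μ univ := by
            rw [← mul_assoc, ← mul_assoc, ← ENNReal.ofReal_mul (by positivity), ← mul_pow]
            congr 4
            ring
        _ ≤ _ := h1.trans (h2.le.trans (h3.trans hCS))
        _ ≤ κ (cthickening δ Z) ^ (1 / 2 : ℝ) * (ENNReal.ofReal (δ ^ m) * C) := by
            rw [hκ, withDensity_apply _ hZm]
            gcongr
            refine le_trans (ENNReal.rpow_le_rpow ?_ (by norm_num)) (hCb δ hδ)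
            exact lintegral_mono' Measure.restrict_le_self le_rfl
        _ = _ := by ring
    exact (ENNReal.mul_le_mul_iff_right hδm ENNReal.ofReal_ne_top).1 h4
  have hlim : Filter.Tendsto (fun δ : ℝ => C * κ (cthickening δ Z) ^ (1 / 2 : ℝ))
      (nhdsWithin 0 (Ioi 0)) (nhds 0) := by
    have h := ((ENNReal.continuous_rpow_const (y := 1 / 2)).tendsto _).comp
      (tendsto_measure_cthickening_of_isCompact (μ := κ) hZ)
    have h' := ENNReal.Tendsto.const_mul h (Or.inr hC)
    rw [hκZ, ENNReal.zero_rpow_of_pos (by norm_num), mul_zero] at h'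
    exact h'.mono_left nhdsWithin_le_nhds
  have h0 : ENNReal.ofReal ((2 / B) ^ m) * ν univ * μ univ ≤ 0 := by
    refine ge_of_tendsto hlim ?_
    filter_upwards [Ioc_mem_nhdsGT (zero_lt_one' ℝ)] with δ hδ using hbound δ hδ.1 hδ.2
  have hB0 : ENNReal.ofReal ((2 / B) ^ m) ≠ 0 := (ENNReal.ofReal_pos.2 (by positivity)).ne'
  rw [nonpos_iff_eq_zero, mul_eq_zero, mul_eq_zero] at h0
  rcases h0 with (h | h) | h
  · exact absurd h hB0
  · exact Or.inr (Measure.measure_univ_eq_zero.1 h)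
  · exact Or.inl (Measure.measure_univ_eq_zero.1 h)

end Shear

theorem exists_measure_energy_le {ι : Type*} [Fintype ι] {B : Set (ι → ℝ)} (hB : MeasurableSet B)
    {m : ℕ} (hm : (m : ℝ≥0∞) < dimH B) :
    ∃ K ⊆ B, IsCompact K ∧ ∃ μ : Measure (ι → ℝ), IsFiniteMeasure μ ∧ μ ≠ 0 ∧ μ Kᶜ = 0 ∧
      ∃ E : ℝ≥0∞, E ≠ ∞ ∧ ∀ x, ∫⁻ y, dyadicKernel m (x - y) ∂μ ≤ E := by
  obtain ⟨t, hmt, htB⟩ := ENNReal.lt_iff_exists_nnreal_btwn.1 hm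
  have hmt' : (m : NNReal) < t := by exact_mod_cast hmt
  have hmt'' : (m : ℝ) < t := by exact_mod_cast hmt'
  have ht : (0 : ℝ) < t := (Nat.cast_nonneg m).trans_lt hmt''
  obtain ⟨K, hKB, hK, μ, hμ, hμ0, hμK, M, hM⟩ := exists_frostman_measure hB ht
    (by rw [hausdorffMeasure_of_lt_dimH htB]; exact ENNReal.top_ne_zero)
  exact ⟨K, hKB, hK, μ, hμ, hμ0, hμK, exists_lintegral_dyadicKernel_le hmt'' hM⟩

theorem measure_singleton_eq_zero_of_energy {ι : Type*} [Fintype ι] {m : ℕ}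
    {μ : Measure (ι → ℝ)} {E : ℝ≥0∞} (hE : E ≠ ∞)
    (h : ∀ x, ∫⁻ y, dyadicKernel m (x - y) ∂μ ≤ E) (x : ι → ℝ) : μ {x} = 0 := by
  by_contra h0
  refine hE (top_le_iff.1 ?_)
  calc ∞ = ∫⁻ y in {x}, dyadicKernel m (x - y) ∂μ := by
        rw [lintegral_singleton, sub_self, dyadicKernel_zero, ENNReal.top_mul h0]
    _ ≤ _ := setLIntegral_le_lintegral _ _
    _ ≤ E := h x

theorem shear_eq_shear_iff {ι : Type*} {i : ι} {a : {j // j ≠ i} → ℝ} {x y : ι → ℝ}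
    (h : y i - x i ≠ 0) :
    shear i a x = shear i a y ↔ a = fun j : {j // j ≠ i} => (y j - x j) / (y i - x i) := by
  rw [funext_iff, funext_iff]
  refine forall_congr' fun j => ?_
  rw [eq_div_iff h, shear, shear]
  constructor <;> intro h' <;> linarith

theorem isClosed_exists_shear_eq {ι : Type*} [Fintype ι] (i : ι) {K : Set (ι → ℝ)}
    (hK : IsCompact K) :
    IsClosed {p : (ι → ℝ) × ({j // j ≠ i} → ℝ) | ∃ y ∈ K, shear i p.2 p.1 = shear i p.2 y} := by
  have := isCompact_iff_compactSpace.1 hK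
  have hS : IsClosed {s : ((ι → ℝ) × ({j // j ≠ i} → ℝ)) × K |
      shear i s.1.2 s.1.1 = shear i s.1.2 s.2} :=
    isClosed_eq ((continuous_shear i).comp
        (f := fun s : ((ι → ℝ) × ({j // j ≠ i} → ℝ)) × K => (s.1.2, s.1.1)) (by fun_prop))
      ((continuous_shear i).comp
        (f := fun s : ((ι → ℝ) × ({j // j ≠ i} → ℝ)) × K => (s.1.2, (s.2 : ι → ℝ))) (by fun_prop))
  convert isClosedMap_fst_of_compactSpace _ hS using 1
  ext p
  constructor
  · rintro ⟨y, hy, h⟩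
    exact ⟨(p, ⟨y, hy⟩), h, rfl⟩
  · rintro ⟨⟨p', y⟩, h, rfl⟩
    exact ⟨y, y.2, h⟩

/-- The map sending a direction to its slopes is Lipschitz away from the hyperplane `e i = 0`. -/
theorem lipschitzOnWith_slopes {n : ℕ} (i : Fin n) {c : ℝ} (hc : 0 < c) :
    LipschitzOnWith (Real.toNNReal (1 / c + 1 / c ^ 2))
      (fun (e : EuclideanSpace ℝ (Fin n)) (j : {j // j ≠ i}) => e j / e i)
      {e | ‖e‖ ≤ 1 ∧ c ≤ |e i|} := by
  refine LipschitzOnWith.of_dist_le_mul fun e he e' he' => ?_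
  rw [Real.coe_toNNReal _ (by positivity), dist_pi_le_iff (by positivity)]
  intro j
  have h1 : 0 < |e i| := hc.trans_le he.2
  have h2 : 0 < |e' i| := hc.trans_le he'.2
  have hd : ∀ k, |e k - e' k| ≤ dist e e' := fun k => by
    rw [dist_eq_norm]; exact PiLp.norm_apply_le (e - e') k
  have hj : |e' j| ≤ 1 := (PiLp.norm_apply_le e' j).trans he'.1
  rw [Real.dist_eq]
  have hid : e j / e i - e' j / e' i =
      (e j - e' j) / e i + e' j * (e' i - e i) / (e i * e' i) := by
    have := abs_pos.1 h1
    have := abs_pos.1 h2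
    field_simp
    ring
  rw [hid, add_mul]
  refine (abs_add_le _ _).trans (add_le_add ?_ ?_)
  · rw [abs_div, one_div_mul_eq_div]
    exact div_le_div₀ dist_nonneg (hd j) hc he.2
  · rw [abs_div, abs_mul, abs_mul, one_div_mul_eq_div]
    refine div_le_div₀ dist_nonneg ?_ (by positivity) ?_
    · rw [abs_sub_comm]
      exact (mul_le_of_le_one_left (abs_nonneg _) hj).trans (hd i)
    · rw [sq]
      exact mul_le_mul he.2 he'.2 hc.le h1.le

theorem volume_exists_shear_eq_zero {n : ℕ} (i : Fin n) {A : Set (EuclideanSpace ℝ (Fin n))}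
    {x : EuclideanSpace ℝ (Fin n)}
    (hx : μH[(n : ℝ) - 1] ((fun y => ‖y - x‖⁻¹ • (y - x)) '' (A \ {x})) = 0)
    {K : Set (Fin n → ℝ)} (hK : Bornology.IsBounded K) (hKA : ∀ y ∈ K, WithLp.toLp 2 y ∈ A)
    {r : ℝ} (hr : 0 < r) (hKr : ∀ y ∈ K, r ≤ |y i - x i|) :
    volume {a | ∃ y ∈ K, shear i a x = shear i a y} = 0 := by
  obtain ⟨B, hB, hKB⟩ : ∃ B > 0, ∀ y ∈ K, ‖WithLp.toLp 2 y - x‖ ≤ B := by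
    obtain ⟨b, hb⟩ := (((EuclideanSpace.equiv (Fin n) ℝ).symm.lipschitz.isBounded_image
      hK)).exists_norm_le
    refine ⟨max 1 (b + ‖x‖), by positivity, fun y hy => le_max_of_le_right ?_⟩
    exact (norm_sub_le _ _).trans (add_le_add_left (hb _ ⟨y, hy, rfl⟩) _)
  set π : EuclideanSpace ℝ (Fin n) → EuclideanSpace ℝ (Fin n) := fun y => ‖y - x‖⁻¹ • (y - x)
  have hz : ∀ y ∈ K, 0 < ‖WithLp.toLp 2 y - x‖ := fun y hy => norm_pos_iff.2 fun h => by
    have := hKr y hy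
    have h' : y i - x i = 0 := congrArg (fun v : EuclideanSpace ℝ (Fin n) => v i) h
    rw [h', abs_zero] at this
    linarith
  have hπ : π '' (WithLp.toLp 2 '' K) ⊆ {e | ‖e‖ ≤ 1 ∧ r / B ≤ |e i|} := by
    rintro _ ⟨_, ⟨y, hy, rfl⟩, rfl⟩
    have h0 := hz y hy
    constructor
    · rw [norm_smul, norm_inv, norm_norm, inv_mul_cancel₀ h0.ne']
    · change r / B ≤ |‖WithLp.toLp 2 y - x‖⁻¹ * (y i - x i)|
      rw [abs_mul, abs_inv, abs_norm, inv_mul_eq_div]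
      exact div_le_div₀ (abs_nonneg _) (hKr y hy) h0 (hKB y hy)
  have hnull : μH[(n : ℝ) - 1] (π '' (WithLp.toLp 2 '' K)) = 0 := by
    refine measure_mono_null (image_mono ?_) hx
    rintro _ ⟨y, hy, rfl⟩
    refine ⟨hKA y hy, fun h => ?_⟩
    have := hz y hy
    rw [mem_singleton_iff.1 h, sub_self, norm_zero] at this
    exact lt_irrefl _ this
  have hn : 1 ≤ n := i.pos
  have hn' : (0 : ℝ) ≤ (n : ℝ) - 1 := sub_nonneg.2 (by exact_mod_cast hn)
  have himg := ((lipschitzOnWith_slopes i (div_pos hr hB)).mono hπ).hausdorffMeasure_image_le hn'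
  rw [hnull, mul_zero, nonpos_iff_eq_zero] at himg
  have hcard : ((Fintype.card {j : Fin n // j ≠ i} : ℕ) : ℝ) = (n : ℝ) - 1 := by
    rw [Fintype.card_subtype_compl, Fintype.card_fin, Fintype.card_subtype_eq, Nat.cast_sub hn,
      Nat.cast_one]
  rw [← hcard, hausdorffMeasure_pi_real] at himg
  refine measure_mono_null ?_ himg
  rintro a ⟨y, hy, hya⟩
  have hyx : y i - x i ≠ 0 := abs_pos.1 (hr.trans_le (hKr y hy))
  refine ⟨_, ⟨_, ⟨y, hy, rfl⟩, rfl⟩, ?_⟩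
  rw [(shear_eq_shear_iff hyx).1 hya]
  funext j
  change (‖WithLp.toLp 2 y - x‖⁻¹ * (y j - x j)) / (‖WithLp.toLp 2 y - x‖⁻¹ * (y i - x i)) = _
  exact mul_div_mul_left _ _ (inv_ne_zero (hz y hy).ne')

theorem exists_coordinate_separated {ι : Type*} [Fintype ι] {ν : Measure (ι → ℝ)} (hν : ν ≠ 0)
    {L : Set (ι → ℝ)} (hL : ν Lᶜ = 0) {x : ι → ℝ} (hx : ν {x} = 0) :
    ∃ (i : ι) (q : ℚ) (k : ℕ), |x i - q| ≤ 1 / (k + 1) ∧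
      ν (L ∩ {y | 2 * (1 / (k + 1)) ≤ |y i - q|}) ≠ 0 := by
  by_contra! hcon
  refine hν (Measure.measure_univ_eq_zero.1 ?_)
  have hcov : (univ : Set (ι → ℝ)) ⊆ {x} ∪ (Lᶜ ∪ ⋃ (i : ι) (k : ℕ),
      (L ∩ {y | 3 * (1 / ((k : ℝ) + 1)) ≤ |y i - x i|})) := by
    intro y _
    by_cases hyx : y = x
    · exact Or.inl hyx
    by_cases hyL : y ∈ L
    swap
    · exact Or.inr (Or.inl hyL)
    obtain ⟨i, hi⟩ := Function.ne_iff.1 hyx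
    have hpos : 0 < |y i - x i| / 3 := by
      have := abs_pos.2 (sub_ne_zero.2 hi)
      positivity
    obtain ⟨k, hk⟩ := exists_nat_one_div_lt hpos
    refine Or.inr (Or.inr (mem_iUnion₂.2 ⟨i, k, hyL, ?_⟩))
    change 3 * (1 / ((k : ℝ) + 1)) ≤ |y i - x i|
    linarith
  refine measure_mono_null hcov (measure_union_null hx (measure_union_null hL ?_))
  refine measure_iUnion_null fun i => measure_iUnion_null fun k => ?_
  obtain ⟨q, hq⟩ := exists_rat_near (x i) (Nat.one_div_pos_of_nat (α := ℝ) (n := k))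
  refine measure_mono_null (inter_subset_inter_right _ fun y hy => ?_) (hcon i q k hq.le)
  change 3 * (1 / ((k : ℝ) + 1)) ≤ |y i - x i| at hy
  change 2 * (1 / ((k : ℝ) + 1)) ≤ |y i - q|
  have := abs_sub_le (y i) q (x i)
  rw [abs_sub_comm (q : ℝ)] at this
  linarith

theorem stmt_15 (n : ℕ) (hn : 2 ≤ n)
    (A : Set (EuclideanSpace ℝ (Fin n))) (hA : MeasurableSet A)
    (hdA : (n : ℝ≥0∞) - 1 < dimH A) :
    dimH {x : EuclideanSpace ℝ (Fin n) |
        μH[(n : ℝ) - 1] ((fun y => ‖y - x‖⁻¹ • (y - x)) '' (A \ {x})) = 0} ≤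
      (n : ℝ≥0∞) - 1 := by
  have hcast : (n : ℝ≥0∞) - 1 = ((n - 1 : ℕ) : ℝ≥0∞) := by
    rw [ENNReal.natCast_sub, Nat.cast_one]
  have hcard : ∀ i : Fin n, Fintype.card {j : Fin n // j ≠ i} = n - 1 := fun i => by
    rw [Fintype.card_subtype_compl, Fintype.card_fin, Fintype.card_subtype_eq]
  rw [hcast] at hdA ⊢
  let e := EuclideanSpace.equiv (Fin n) ℝ
  by_contra! hdE
  set S := {x : EuclideanSpace ℝ (Fin n) |
        μH[(n : ℝ) - 1] ((fun y => ‖y - x‖⁻¹ • (y - x)) '' (A \ {x})) = 0}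
  have hA' : MeasurableSet (e '' A) := by
    rw [e.image_eq_preimage_symm]
    exact e.symm.continuous.measurable hA
  rw [← e.dimH_image] at hdA hdE
  obtain ⟨L, hLA, hL, ν, hνf, hν0, hνL, E', hEt', hE'⟩ := exists_measure_energy_le hA' hdA
  let P : Fin n × ℚ × ℕ → Set (Fin n → ℝ) := fun p => {x ∈ e '' S |
    |x p.1 - p.2.1| ≤ 1 / ((p.2.2 : ℝ) + 1) ∧
      ν (L ∩ {y | 2 * (1 / ((p.2.2 : ℝ) + 1)) ≤ |y p.1 - p.2.1|}) ≠ 0}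
  have hP : e '' S ⊆ ⋃ p, P p := fun x hx => by
    obtain ⟨i, q, k, h1, h2⟩ := exists_coordinate_separated hν0 hνL
      (measure_singleton_eq_zero_of_energy hEt' hE' x)
    exact mem_iUnion.2 ⟨(i, q, k), hx, h1, h2⟩
  have hdP := hdE.trans_le (dimH_mono hP)
  rw [dimH_iUnion, lt_iSup_iff] at hdP
  obtain ⟨⟨i, q, k⟩, hdP⟩ := hdP
  set r : ℝ := 1 / ((k : ℝ) + 1) with hrdef
  have hr : 0 < r := Nat.one_div_pos_of_nat
  set K := L ∩ {y | 2 * r ≤ |y i - q|} with hKdef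
  have hK : IsCompact K := hL.inter_right
    (isClosed_le continuous_const ((continuous_apply i).sub continuous_const).abs)
  have hνK : ν K ≠ 0 := by
    rcases eq_empty_or_nonempty (P (i, q, k)) with h | ⟨x, hx⟩
    · rw [h, dimH_empty] at hdP
      exact absurd hdP not_lt_zero
    · exact hx.2.2
  have hsep : ∀ x : Fin n → ℝ, |x i - q| ≤ r → ∀ y ∈ K, r ≤ |y i - x i| := fun x hx y hy => by
    have h1 : 2 * r ≤ |y i - q| := hy.2
    have := abs_sub_le (y i) (x i) q
    linarith
  let Q : Set (Fin n → ℝ) := {x | |x i - q| ≤ r ∧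
    volume {a | ∃ y ∈ K, shear i a x = shear i a y} = 0}
  have hQ : MeasurableSet Q := by
    refine MeasurableSet.inter ?_ ?_
    · exact (isClosed_le ((continuous_apply i).sub continuous_const).abs
        continuous_const).measurableSet
    · exact measurable_measure_prodMk_left (isClosed_exists_shear_eq i hK).measurableSet
        (measurableSet_singleton 0)
  have hPQ : P (i, q, k) ⊆ Q := by
    rintro _ ⟨⟨x, hx, rfl⟩, hxq, -⟩
    refine ⟨hxq, volume_exists_shear_eq_zero i hx hK.isBounded (fun y hy => ?_) hr
      (hsep _ hxq)⟩
    obtain ⟨y', hy', rfl⟩ := hLA hy.1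
    exact hy'
  obtain ⟨K', hK'Q, hK', μ, hμf, hμ0, hμK', E, hEt, hE⟩ :=
    exists_measure_energy_le hQ (hdP.trans_le (dimH_mono hPQ))
  rw [← hcard i] at hE hE'
  have hνK' : ν.restrict K Kᶜ = 0 := by
    rw [Measure.restrict_apply hK.measurableSet.compl, compl_inter_self, measure_empty]
  rcases eq_zero_or_eq_zero_of_null_shear i hEt hEt' hE
    (fun x => (lintegral_mono' Measure.restrict_le_self le_rfl).trans (hE' x)) hK' hK hμK' hνK' hr
    (fun x hx => hsep x (hK'Q hx).1) (fun x hx => (hK'Q hx).2) with h | h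
  · exact hμ0 h
  · exact hνK (Measure.restrict_eq_zero.1 h)
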